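/- If p and q are strictly positive probability vectors on finite alphabets with H(p) > H(q), then there exists a homomorphism (factor map) from the Bernoulli scheme BS(p) to the Bernoulli scheme BS(q). -/

import Mathlib

open MeasureTheory ENNReal Filter

noncomputable section

/-- The left shift transformation on bi-infinite sequences: `(shift x) n = x (n+1)`. -/
def shift {A : Type*} : (ℤ → A) → (ℤ → A) := fun x n => x (n + 1)

/-- `φ` is a homomorphism (factor map) from the shift system `(ℤ → A, μ, shift)` to
`(ℤ → B, ν, shift)`, defined on the shift-invariant full-measure domain `D`. -/
structure IsFactorMap {A B : Type*} [MeasurableSpace A] [MeasurableSpace B]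
    (μ : Measure (ℤ → A)) (ν : Measure (ℤ → B))
    (D : Set (ℤ → A)) (φ : (ℤ → A) → (ℤ → B)) : Prop where
  measurable_map : Measurable φ
  dom_measurable : MeasurableSet D
  dom_shift_invariant : shift ⁻¹' D = D
  dom_full : μ D = 1
  pushforward : ν = μ.map φ
  equivariant : ∀ x ∈ D, φ (shift x) = shift (φ x)

/-- The window `[-q, r]` of `x` determines the zero coordinate of the image under `φ`
(among points of the domain `D`). -/
def DeterminesAt {A B : Type*} (D : Set (ℤ → A)) (φ : (ℤ → A) → (ℤ → B))
    (q r : ℕ) (x : ℤ → A) : Prop :=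
  ∀ y ∈ D, (∀ i : ℤ, -(q : ℤ) ≤ i → i ≤ (r : ℤ) → y i = x i) → φ y 0 = φ x 0

/-- A homomorphism `φ` with domain `D` is finitary if for almost every `x` in the domain
there are nonnegative integers `q`, `r` such that the coordinates `x_{-q}, …, x_r`
determine `(φ x)_0`. -/
def IsFinitary {A B : Type*} [MeasurableSpace A] [MeasurableSpace B]
    (μ : Measure (ℤ → A)) (D : Set (ℤ → A)) (φ : (ℤ → A) → (ℤ → B)) : Prop :=
  ∀ᵐ x ∂μ, x ∈ D → ∃ q r : ℕ, DeterminesAt D φ q r x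

/-- The code length `C(x) = q(x) + r(x)` with `q(x), r(x)` minimal such that the window
`[-q(x), r(x)]` determines the zero output coordinate (`⊤` if no finite window works). -/
def codeLength {A B : Type*} (D : Set (ℤ → A)) (φ : (ℤ → A) → (ℤ → B))
    (x : ℤ → A) : ℝ≥0∞ :=
  ⨅ (q : ℕ) (r : ℕ) (_ : DeterminesAt D φ q r x), ((q : ℝ≥0∞) + (r : ℝ≥0∞))

/-- `μ` is the Bernoulli (product) measure on `(ℤ → A)` given by the probability vector `p`. -/
def IsBernoulliMeasure {A : Type*} [MeasurableSpace A] (μ : Measure (ℤ → A)) (p : A → ℝ) : Prop :=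
  ∀ (F : Finset ℤ) (s : ℤ → A),
    μ {x | ∀ i ∈ F, x i = s i} = ENNReal.ofReal (∏ i ∈ F, p (s i))

/-- A strictly positive probability vector on a finite alphabet. -/
def IsProbVector {A : Type*} [Fintype A] (p : A → ℝ) : Prop :=
  (∀ i, 0 < p i) ∧ ∑ i, p i = 1

/-- The entropy `H(p) = -∑ p_i log p_i` of a probability vector. -/
def vecEntropy {A : Type*} [Fintype A] (p : A → ℝ) : ℝ := -∑ i, p i * Real.log (p i)

/-- A finitary isomorphism: a pair of mutually inverse finitary factor maps. -/
def IsFinitaryIsomorphism {A B : Type*} [MeasurableSpace A] [MeasurableSpace B]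
    (μ : Measure (ℤ → A)) (ν : Measure (ℤ → B))
    (D : Set (ℤ → A)) (E : Set (ℤ → B))
    (φ : (ℤ → A) → (ℤ → B)) (ψ : (ℤ → B) → (ℤ → A)) : Prop :=
  IsFactorMap μ ν D φ ∧ IsFactorMap ν μ E ψ ∧
  IsFinitary μ D φ ∧ IsFinitary ν E ψ ∧
  (∀ x ∈ D, φ x ∈ E ∧ ψ (φ x) = x) ∧ (∀ y ∈ E, ψ y ∈ D ∧ φ (ψ y) = y)

namespace BernoulliFactor

/-- Prepend a symbol to a one-sided sequence. -/
def scons {K : Type*} (a : K) (y : ℕ → K) : ℕ → K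
  | 0 => a
  | n + 1 => y n

/-- Remove the first symbol of a one-sided sequence. -/
def stail {K : Type*} (y : ℕ → K) : ℕ → K := fun n => y (n + 1)

@[simp] lemma scons_zero {K : Type*} (a : K) (y : ℕ → K) : scons a y 0 = a := rfl

@[simp] lemma scons_succ {K : Type*} (a : K) (y : ℕ → K) (n : ℕ) : scons a y (n + 1) = y n := rfl

lemma measurable_scons {K : Type*} [MeasurableSpace K] :
    Measurable (fun z : K × (ℕ → K) => scons z.1 z.2) := by
  rw [measurable_pi_iff]
  rintro (_ | n)
  · exact measurable_fst
  · exact (measurable_pi_apply n).comp measurable_snd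

lemma measurable_stail {K : Type*} [MeasurableSpace K] :
    Measurable (stail : (ℕ → K) → ℕ → K) := by
  rw [measurable_pi_iff]
  exact fun n => measurable_pi_apply (n + 1)

lemma measurePreserving_scons {K : Type*} [MeasurableSpace K] (π : Measure K)
    [IsProbabilityMeasure π] :
    MeasurePreserving (fun z : K × (ℕ → K) => scons z.1 z.2)
      (π.prod (Measure.infinitePi fun _ : ℕ => π)) (Measure.infinitePi fun _ : ℕ => π) := by
  classical
  refine ⟨measurable_scons, Measure.eq_infinitePi _ fun s t ht => ?_⟩
  obtain ⟨N, hN⟩ := s.exists_nat_subset_range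
  set t' : ℕ → Set K := fun i => if i ∈ s then t i else Set.univ with ht'
  have hmt' : ∀ i, MeasurableSet (t' i) := fun i => by
    by_cases hi : i ∈ s <;> simp [ht', hi, ht i]
  have hset : (Set.pi (s : Set ℕ) t) = Set.pi (Finset.range (N + 1) : Set ℕ) t' := by
    ext x
    simp only [Set.mem_pi, Finset.mem_coe, Finset.mem_range, ht']
    constructor
    · intro h i _
      by_cases hi : i ∈ s
      · simpa [hi] using h i hi
      · simp [hi]
    · intro h i hi
      have := h i (by have := Finset.mem_range.1 (hN hi); omega)
      simpa [hi] using this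
  have hprod : ∏ i ∈ s, π (t i) = ∏ i ∈ Finset.range (N + 1), π (t' i) := by
    rw [← Finset.prod_subset (s₁ := s) (hN.trans (Finset.range_mono (Nat.le_succ N)))]
    · exact Finset.prod_congr rfl fun i hi => by simp [ht', hi]
    · intro i _ hi
      simp [ht', hi]
  rw [hset, hprod, Measure.map_apply measurable_scons
    (MeasurableSet.pi (Finset.countable_toSet _) fun i _ => hmt' i)]
  have : (fun z : K × (ℕ → K) => scons z.1 z.2) ⁻¹' Set.pi (Finset.range (N + 1) : Set ℕ) t'
      = t' 0 ×ˢ Set.pi (Finset.range N : Set ℕ) (fun i => t' (i + 1)) := by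
    ext ⟨a, y⟩
    simp only [Set.mem_preimage, Set.mem_pi, Finset.mem_coe, Finset.mem_range, Set.mem_prod]
    constructor
    · exact fun h => ⟨h 0 (by omega), fun i hi => h (i + 1) (by omega)⟩
    · rintro ⟨h0, h⟩ (_ | i) hi
      · exact h0
      · exact h i (by omega)
  rw [this, Measure.prod_prod, Measure.infinitePi_pi _ (fun i _ => hmt' (i + 1)),
    Finset.prod_range_succ', mul_comm]

lemma measurePreserving_uncons {K : Type*} [MeasurableSpace K] (π : Measure K)
    [IsProbabilityMeasure π] :
    MeasurePreserving (fun y : ℕ → K => (y 0, stail y))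
      (Measure.infinitePi fun _ : ℕ => π) (π.prod (Measure.infinitePi fun _ : ℕ => π)) := by
  have hm : Measurable (fun y : ℕ → K => (y 0, stail y)) :=
    (measurable_pi_apply 0).prodMk measurable_stail
  refine ⟨hm, ?_⟩
  conv_lhs => rw [← (measurePreserving_scons π).map_eq]
  rw [Measure.map_map hm measurable_scons]
  exact Measure.map_id

/-- Two probability measures on a product of copies of a finite alphabet agree as soon as one
dominates the other on cylinders. -/
lemma ext_of_cylinder_le {ι B : Type*} [Finite B] [MeasurableSpace B] [DiscreteMeasurableSpace B]
    {m₁ m₂ : Measure (ι → B)} [IsProbabilityMeasure m₁] [IsProbabilityMeasure m₂]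
    (h : ∀ (F : Finset ι) (t : ι → B),
      m₁ {x | ∀ i ∈ F, x i = t i} ≤ m₂ {x | ∀ i ∈ F, x i = t i}) : m₁ = m₂ := by
  classical
  have key : ∀ I : Finset ι, m₁.map I.restrict = m₂.map I.restrict := by
    intro I
    have hI : Measurable (I.restrict : (ι → B) → (I → B)) := Finset.measurable_restrict I
    have : IsProbabilityMeasure (m₁.map I.restrict) :=
      Measure.isProbabilityMeasure_map hI.aemeasurable
    have : IsProbabilityMeasure (m₂.map I.restrict) :=
      Measure.isProbabilityMeasure_map hI.aemeasurable
    refine Measure.eq_of_le_of_measure_univ_eq ?_ (by simp)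
    rw [Measure.le_iff]
    intro s hs
    rw [← Measure.tsum_indicator_apply_singleton _ s hs,
      ← Measure.tsum_indicator_apply_singleton _ s hs]
    refine ENNReal.tsum_le_tsum fun y => Set.indicator_le_indicator ?_
    rw [Measure.map_apply hI (MeasurableSet.singleton y),
      Measure.map_apply hI (MeasurableSet.singleton y)]
    rcases isEmpty_or_nonempty (ι → B) with he | ⟨⟨x₀⟩⟩
    · simp [Set.eq_empty_of_isEmpty]
    · have hy : (I.restrict : (ι → B) → (I → B)) ⁻¹' {y} =
          {x : ι → B | ∀ i ∈ I, x i = if hi : i ∈ I then y ⟨i, hi⟩ else x₀ i} := by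
        ext x
        simp only [Set.mem_preimage, Set.mem_singleton_iff, funext_iff, Finset.restrict,
          Subtype.forall, Set.mem_ofPred_eq]
        exact forall₂_congr fun i hi => by simp [hi]
      rw [hy]
      exact h I _
  refine IsProjectiveLimit.unique (P := fun I : Finset ι => m₂.map I.restrict) ?_ ?_
  · exact fun I => key I
  · exact fun I => rfl

/-- Measures on `K × Ω` with `K` countable are determined on sets `{k} × S`. -/
lemma ext_prod_countable {K Ω : Type*} [Countable K] [MeasurableSpace K]
    [DiscreteMeasurableSpace K] [MeasurableSpace Ω] {m₁ m₂ : Measure (K × Ω)}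
    (h : ∀ (k : K) (S : Set Ω), MeasurableSet S → m₁ ({k} ×ˢ S) = m₂ ({k} ×ˢ S)) : m₁ = m₂ := by
  ext T hT
  have hU : T = ⋃ k, {k} ×ˢ (Prod.mk k ⁻¹' T) := by
    ext ⟨k, s⟩
    simp
  have hd : Pairwise (Function.onFun Disjoint fun k : K => ({k} : Set K) ×ˢ (Prod.mk k ⁻¹' T)) := by
    intro i j hij
    refine Set.disjoint_left.2 ?_
    rintro ⟨k, s⟩ h1 h2
    simp only [Set.mem_prod, Set.mem_singleton_iff] at h1 h2
    exact hij (h1.1.symm.trans h2.1)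
  have hm : ∀ k, MeasurableSet (({k} : Set K) ×ˢ (Prod.mk k ⁻¹' T)) := fun k =>
    (MeasurableSet.singleton k).prod (measurable_prodMk_left hT)
  rw [hU, measure_iUnion hd hm, measure_iUnion hd hm]
  exact tsum_congr fun k => h k _ (measurable_prodMk_left hT)

/-- Prepend a word to a one-sided sequence. -/
def prepend {B : Type*} : List B → (ℕ → B) → ℕ → B
  | [], y => y
  | b :: v, y => scons b (prepend v y)

lemma prepend_of_length_le {B : Type*} (v : List B) (y : ℕ → B) {i : ℕ} (hi : v.length ≤ i) :
    prepend v y i = y (i - v.length) := by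
  induction v generalizing i with
  | nil => rfl
  | cons b v ih =>
    obtain ⟨j, rfl⟩ : ∃ j, i = j + 1 := ⟨i - 1, by simp at hi; omega⟩
    simp only [List.length_cons, Nat.add_le_add_iff_right, Nat.add_sub_add_right] at hi ⊢
    exact ih hi

lemma prepend_of_lt_length {B : Type*} (v : List B) (y y' : ℕ → B) {i : ℕ} (hi : i < v.length) :
    prepend v y i = prepend v y' i := by
  induction v generalizing i with
  | nil => simp at hi
  | cons b v ih =>
    cases i with
    | zero => rfl
    | succ j => exact ih (by simpa using hi)

lemma measurable_prepend {B : Type*} [MeasurableSpace B] (v : List B) :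
    Measurable (prepend v) := by
  induction v with
  | nil => exact measurable_id
  | cons b v ih => exact measurable_scons.comp (measurable_const.prodMk ih)

/-- The uniform distribution on `[0, 1)`. -/
def unif : Measure ℝ := volume.restrict (Set.Ico 0 1)

instance : IsProbabilityMeasure unif := ⟨by simp [unif]⟩

lemma ae_unif_mem : ∀ᵐ s ∂unif, s ∈ Set.Ico (0 : ℝ) 1 := ae_restrict_mem measurableSet_Ico

/-- Backward iteration of the fibre maps `T` along the first `R` blocks of `x`. -/
def back {X U Z : Type*} (bl : X → U) (nx : X → X) (T : U → Z → Z) : ℕ → X → Z → Z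
  | 0, _, z => z
  | R + 1, x, z => T (bl x) (back bl nx T R (nx x) z)

lemma back_add {X U Z : Type*} (bl : X → U) (nx : X → X) (T : U → Z → Z) (R m : ℕ) (x : X) (z : Z) :
    back bl nx T (R + m) x z = back bl nx T R x (back bl nx T m (nx^[R] x) z) := by
  induction R generalizing x with
  | zero => simp [back]
  | succ R ih =>
    rw [Nat.add_right_comm]
    simp only [back, ih, Function.iterate_succ, Function.comp]

lemma measurePreserving_back {X U Z : Type*} [MeasurableSpace X] [MeasurableSpace U]
    [MeasurableSpace Z] {μ : Measure X} {P : Measure U} {m : Measure Z}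
    [IsProbabilityMeasure μ] [IsProbabilityMeasure P] [IsProbabilityMeasure m]
    {bl : X → U} {nx : X → X} {T : U → Z → Z}
    (hpar : MeasurePreserving (fun x => (bl x, nx x)) μ (P.prod μ))
    (hT : MeasurePreserving (fun z : U × Z => T z.1 z.2) (P.prod m) m) (R : ℕ) :
    MeasurePreserving (fun z : X × Z => back bl nx T R z.1 z.2) (μ.prod m) m := by
  induction R with
  | zero => exact measurePreserving_snd
  | succ R ih =>
    have h1 := hpar.prod (MeasurePreserving.id m)
    have h2 := measurePreserving_prodAssoc P μ m
    have h3 := (MeasurePreserving.id P).prod ih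
    exact hT.comp (h3.comp (h2.comp h1))

/-- Skew-product fibre map: the emission `em u s` acts on the auxiliary state `w`. -/
def fibre {U K W : Type*} (em : U → ℝ → K) (st : U → ℝ → ℝ) (act : K → W → W) (u : U)
    (z : ℝ × W) : ℝ × W :=
  (st u z.1, act (em u z.1) z.2)

lemma back_fibre_fst {X U K W : Type*} (bl : X → U) (nx : X → X) (em : U → ℝ → K)
    (st : U → ℝ → ℝ) (act : K → W → W) (R : ℕ) (x : X) (s : ℝ) (w : W) :
    (back bl nx (fibre em st act) R x (s, w)).1 = back bl nx st R x s := by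
  induction R generalizing x with
  | zero => rfl
  | succ R ih => simp only [back, fibre, ih]

lemma measurePreserving_fibre {U K W : Type*} [MeasurableSpace U] [MeasurableSpace K]
    [MeasurableSpace W] {P : Measure U} {ρ : Measure K} {m : Measure W}
    [IsProbabilityMeasure P] [IsProbabilityMeasure ρ] [IsProbabilityMeasure m]
    {em : U → ℝ → K} {st : U → ℝ → ℝ} {act : K → W → W}
    (hstep : MeasurePreserving (fun z : U × ℝ => (em z.1 z.2, st z.1 z.2)) (P.prod unif)
      (ρ.prod unif))
    (hact : MeasurePreserving (fun z : K × W => act z.1 z.2) (ρ.prod m) m) :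
    MeasurePreserving (fun z : U × (ℝ × W) => fibre em st act z.1 z.2) (P.prod (unif.prod m))
      (unif.prod m) := by
  have h1 := (measurePreserving_prodAssoc P unif m).symm
  have h2 := hstep.prod (MeasurePreserving.id m)
  have h3 := (Measure.measurePreserving_swap (μ := ρ) (ν := unif)).prod (MeasurePreserving.id m)
  have h4 := measurePreserving_prodAssoc unif ρ m
  have h5 := (MeasurePreserving.id unif).prod hact
  exact h5.comp (h4.comp (h3.comp (h2.comp h1)))

/-- Two points of `[0, 1)` share their first `c` binary digits. -/
def Agree (c : ℤ) (s s' : ℝ) : Prop :=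
  s ∈ Set.Ico (0 : ℝ) 1 ∧ s' ∈ Set.Ico (0 : ℝ) 1 ∧
    ⌊(2 : ℝ) ^ c.toNat * s⌋ = ⌊(2 : ℝ) ^ c.toNat * s'⌋

lemma agree_zero {s s' : ℝ} (hs : s ∈ Set.Ico (0 : ℝ) 1) (hs' : s' ∈ Set.Ico (0 : ℝ) 1) :
    Agree 0 s s' := by
  refine ⟨hs, hs', ?_⟩
  simp [Int.floor_eq_zero_iff.2 hs, Int.floor_eq_zero_iff.2 hs']

section Determined

variable {X U K B : Type*} {bl : X → U} {nx : X → X} {em : U → ℝ → K} {st : U → ℝ → ℝ}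
  {word : K → List B} {e : K → ℤ} {good : K → Prop}

lemma agree_back
    (hdet : ∀ u s s' c, Agree c s s' → good (em u s) →
      Agree (c + e (em u s)) (st u s) (st u s') ∧
        (0 ≤ c + e (em u s) → word (em u s) = word (em u s')))
    {s s' : ℝ} (hs : Agree 0 s s') (d : ℕ → K) (R : ℕ) (x : X)
    (hg : ∀ i < R, good ((back bl nx (fibre em st scons) R x (s, d)).2 i)) :
    Agree (∑ i ∈ Finset.range R, e ((back bl nx (fibre em st scons) R x (s, d)).2 i))
      (back bl nx st R x s) (back bl nx st R x s') := by
  induction R generalizing x with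
  | zero => simpa [back] using hs
  | succ R ih =>
    have ih' := ih (nx x) (fun i hi => hg (i + 1) (by omega))
    have h0 := hg 0 (by omega)
    rw [Finset.sum_range_succ']
    simp only [back, fibre, scons_succ, scons_zero, back_fibre_fst] at h0 ⊢
    exact (hdet _ _ _ _ ih' h0).1

lemma out_determined
    (hdet : ∀ u s s' c, Agree c s s' → good (em u s) →
      Agree (c + e (em u s)) (st u s) (st u s') ∧
        (0 ≤ c + e (em u s) → word (em u s) = word (em u s')))
    (hlen : ∀ u s, 0 < (word (em u s)).length)
    {s s' : ℝ} (hs : Agree 0 s s') (d : ℕ → K) (y y' : ℕ → B) (i R : ℕ) (x : X) (hi : i < R)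
    (hg : ∀ l < R, good ((back bl nx (fibre em st scons) R x (s, d)).2 l))
    (hsum : ∀ j ≤ i,
      0 ≤ ∑ l ∈ Finset.Ico j R, e ((back bl nx (fibre em st scons) R x (s, d)).2 l)) :
    (back bl nx (fibre em st fun k => prepend (word k)) R x (s, y)).2 i =
      (back bl nx (fibre em st fun k => prepend (word k)) R x (s', y')).2 i := by
  induction R generalizing x i with
  | zero => omega
  | succ R ih =>
    have hg' : ∀ l < R, good ((back bl nx (fibre em st scons) R (nx x) (s, d)).2 l) :=
      fun l hl => hg (l + 1) (by omega)
    have ha := agree_back hdet hs d R (nx x) hg'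
    have h0 := hg 0 (by omega)
    have hs0 := hsum 0 (Nat.zero_le i)
    rw [← Finset.range_eq_Ico, Finset.sum_range_succ'] at hs0
    simp only [back, fibre, scons_succ, scons_zero, back_fibre_fst] at h0 hs0 ⊢
    have hw := (hdet _ _ _ _ ha h0).2 hs0
    rw [← hw]
    set v := word (em (bl x) (back bl nx st R (nx x) s)) with hv
    rcases lt_or_ge i v.length with hlt | hge
    · exact prepend_of_lt_length _ _ _ hlt
    · rw [prepend_of_length_le _ _ hge, prepend_of_length_le _ _ hge]
      have hpos : 0 < v.length := hlen _ _
      refine ih (i - v.length) (nx x) (by omega) hg' fun j hj => ?_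
      have := hsum (j + 1) (by omega)
      rw [← Finset.sum_Ico_add' _ j R 1] at this
      exact this

end Determined

lemma measurableSet_cylinder_eq {ι B : Type*} [MeasurableSpace B] [MeasurableSingletonClass B]
    (F : Finset ι) (t : ι → B) : MeasurableSet {y : ι → B | ∀ i ∈ F, y i = t i} := by
  have : {y : ι → B | ∀ i ∈ F, y i = t i} = Set.pi (F : Set ι) fun i => {t i} := by
    ext y
    simp [Set.mem_pi]
  rw [this]
  exact MeasurableSet.pi (Finset.countable_toSet F) fun i _ => MeasurableSet.singleton (t i)

/-- A real random walk with positive drift is eventually nonnegative from every starting time. -/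
lemma ae_eventually_sum_nonneg {K : Type*} [MeasurableSpace K] (ρ : Measure K)
    [IsProbabilityMeasure ρ] {e : K → ℝ} (hem : Measurable e) (he : Integrable e ρ)
    (hpos : 0 < ∫ k, e k ∂ρ) :
    ∀ᵐ d ∂(Measure.infinitePi fun _ : ℕ => ρ), ∀ j : ℕ,
      ∀ᶠ R in atTop, 0 ≤ ∑ l ∈ Finset.Ico j R, e (d l) := by
  have hev : ∀ i : ℕ, MeasurePreserving (Function.eval i) (Measure.infinitePi fun _ : ℕ => ρ) ρ :=
    fun i => measurePreserving_eval_infinitePi (fun _ : ℕ => ρ) i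
  have hind : ProbabilityTheory.iIndepFun (fun (i : ℕ) (d : ℕ → K) => e (d i))
      (Measure.infinitePi fun _ : ℕ => ρ) :=
    ProbabilityTheory.iIndepFun_infinitePi (X := fun (_ : ℕ) => e) (fun _ => hem)
  have hint : Integrable (fun d : ℕ → K => e (d 0)) (Measure.infinitePi fun _ : ℕ => ρ) :=
    (hev 0).integrable_comp_of_integrable he
  have hlaw := ProbabilityTheory.strong_law_ae_real (μ := Measure.infinitePi fun _ : ℕ => ρ)
    (fun (i : ℕ) (d : ℕ → K) => e (d i)) hint (fun i j hij => hind.indepFun hij) (fun i => by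
      refine ⟨(hem.comp (measurable_pi_apply i)).aemeasurable,
        (hem.comp (measurable_pi_apply 0)).aemeasurable, ?_⟩
      have hmap : ∀ j : ℕ, Measure.map (fun d : ℕ → K => e (d j))
          (Measure.infinitePi fun _ : ℕ => ρ) = ρ.map e := fun j => by
        conv_rhs => rw [← (hev j).map_eq, Measure.map_map hem (hev j).measurable]
        rfl
      rw [hmap i, hmap 0])
  have hmean : ∫ d : ℕ → K, e (d 0) ∂(Measure.infinitePi fun _ : ℕ => ρ) = ∫ k, e k ∂ρ := by
    rw [← (hev 0).map_eq, integral_map (hev 0).measurable.aemeasurable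
      hem.aestronglyMeasurable]
    rw [(hev 0).map_eq]
  rw [hmean] at hlaw
  filter_upwards [hlaw] with d hd j
  set c := ∫ k, e k ∂ρ with hc
  have h1 : ∀ᶠ R : ℕ in atTop, c / 2 < (∑ i ∈ Finset.range R, e (d i)) / R :=
    hd.eventually_const_lt (by linarith)
  have h2 : ∀ᶠ R : ℕ in atTop, (∑ i ∈ Finset.range j, e (d i)) ≤ c / 2 * R :=
    ((tendsto_natCast_atTop_atTop (R := ℝ)).const_mul_atTop
      (by linarith : 0 < c / 2)).eventually_ge_atTop _
  filter_upwards [h1, h2, eventually_gt_atTop j] with R a b hR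
  have hR0 : (0 : ℝ) < R := by exact_mod_cast (by omega : 0 < R)
  rw [lt_div_iff₀ hR0] at a
  have := Finset.sum_range_add_sum_Ico (fun i => e (d i)) hR.le
  linarith

/-- Contraction of a random dynamical system of binary expansions yields a stationary code. -/
theorem exists_stream_code {X U K B : Type*} [MeasurableSpace X] [MeasurableSpace U]
    [MeasurableSpace K] [Countable K] [DiscreteMeasurableSpace K]
    [Finite B] [Nonempty B] [MeasurableSpace B] [DiscreteMeasurableSpace B]
    {μ : Measure X} {P : Measure U} {ρ : Measure K} {π : Measure B}
    [IsProbabilityMeasure μ] [IsProbabilityMeasure P] [IsProbabilityMeasure ρ]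
    [IsProbabilityMeasure π]
    {bl : X → U} {nx : X → X} {em : U → ℝ → K} {st : U → ℝ → ℝ}
    {word : K → List B} {len : U → ℕ} {e : K → ℤ} {good : K → Prop}
    (hpar : MeasurePreserving (fun x => (bl x, nx x)) μ (P.prod μ))
    (hstep : MeasurePreserving (fun z : U × ℝ => (em z.1 z.2, st z.1 z.2)) (P.prod unif)
      (ρ.prod unif))
    (hst : ∀ u s, s ∈ Set.Ico (0 : ℝ) 1 → st u s ∈ Set.Ico (0 : ℝ) 1)
    (hlen : ∀ u s, (word (em u s)).length = len u) (hlen0 : ∀ u, 0 < len u)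
    (hact : MeasurePreserving (fun z : K × (ℕ → B) => prepend (word z.1) z.2)
      (ρ.prod (Measure.infinitePi fun _ : ℕ => π)) (Measure.infinitePi fun _ : ℕ => π))
    (he : Integrable (fun k => (e k : ℝ)) ρ) (hpos : 0 < ∫ k, (e k : ℝ) ∂ρ)
    (hgood : ∀ᵐ k ∂ρ, good k)
    (hdet : ∀ u s s' c, Agree c s s' → good (em u s) →
      Agree (c + e (em u s)) (st u s) (st u s') ∧
        (0 ≤ c + e (em u s) → word (em u s) = word (em u s'))) :
    ∃ Y : X → ℕ → B, Measurable Y ∧ μ.map Y = (Measure.infinitePi fun _ : ℕ => π) ∧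
      ∀ x i, len (bl x) ≤ i → Y x i = Y (nx x) (i - len (bl x)) := by
  classical
  obtain ⟨b₀⟩ := ‹Nonempty B›
  set νp : Measure (ℕ → B) := Measure.infinitePi fun _ : ℕ => π with hνp
  set ρp : Measure (ℕ → K) := Measure.infinitePi fun _ : ℕ => ρ with hρp
  set T : U → ℝ × (ℕ → B) → ℝ × (ℕ → B) := fibre em st fun k => prepend (word k) with hT
  set E : U → ℝ × (ℕ → K) → ℝ × (ℕ → K) := fibre em st scons with hE
  set o : ℕ → X → ℕ → B := fun R x => (back bl nx T R x (0, fun _ => b₀)).2 with ho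
  have hTback : ∀ R, MeasurePreserving (fun z : X × (ℝ × (ℕ → B)) => back bl nx T R z.1 z.2)
      (μ.prod (unif.prod νp)) (unif.prod νp) := fun R =>
    measurePreserving_back hpar (measurePreserving_fibre hstep hact) R
  have hEback : ∀ R, MeasurePreserving (fun z : X × (ℝ × (ℕ → K)) => back bl nx E R z.1 z.2)
      (μ.prod (unif.prod ρp)) (unif.prod ρp) := fun R =>
    measurePreserving_back hpar (measurePreserving_fibre hstep (measurePreserving_scons ρ)) R
  have hom : ∀ R i b, MeasurableSet {x | o R x i = b} := by
    intro R i b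
    have h1 : Measurable fun x => o R x i :=
      (measurable_pi_apply i).comp (measurable_snd.comp ((hTback R).measurable.comp
        (measurable_id.prodMk measurable_const)))
    exact h1 (MeasurableSet.singleton b)
  let Y : X → ℕ → B := fun x i =>
    if h : ∃ b, ∀ᶠ R in atTop, o R x i = b then h.choose else b₀
  have hYeq : ∀ x i b, (∀ᶠ R in atTop, o R x i = b) → Y x i = b := by
    intro x i b hb
    have h : ∃ b, ∀ᶠ R in atTop, o R x i = b := ⟨b, hb⟩
    simp only [Y, dif_pos h]
    obtain ⟨R, h1, h2⟩ := (h.choose_spec.and hb).exists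
    rw [← h1, h2]
  have hYm : Measurable Y := by
    rw [measurable_pi_iff]
    intro i
    have hev : ∀ b, MeasurableSet {x | ∀ᶠ R in atTop, o R x i = b} := by
      intro b
      simp only [eventually_atTop, Set.ofPred_exists, Set.ofPred_forall]
      exact MeasurableSet.iUnion fun a => MeasurableSet.iInter fun R => MeasurableSet.iInter
        fun _ => hom R i b
    refine measurable_to_countable' fun b => ?_
    have : (fun x => Y x i) ⁻¹' {b} = {x | ∀ᶠ R in atTop, o R x i = b} ∪
        ({x | b = b₀} ∩ ⋂ b', {x | ∀ᶠ R in atTop, o R x i = b'}ᶜ) := by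
      ext x
      simp only [Set.mem_preimage, Set.mem_singleton_iff, Set.mem_union, Set.mem_inter_iff,
        Set.mem_ofPred_eq, Set.mem_iInter, Set.mem_compl_iff]
      constructor
      · intro hY
        by_cases h : ∃ b, ∀ᶠ R in atTop, o R x i = b
        · obtain ⟨b', hb'⟩ := h
          left
          rwa [← hY, hYeq x i b' hb']
        · right
          refine ⟨?_, not_exists.1 h⟩
          rw [← hY]
          exact dif_neg h
      · rintro (h | ⟨rfl, h⟩)
        · exact hYeq x i b h
        · exact dif_neg (not_exists.2 h)
    rw [this]
    exact (hev b).union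
      ((MeasurableSet.const _).inter (MeasurableSet.iInter fun b' => (hev b').compl))
  refine ⟨Y, hYm, ?_, ?_⟩
  · have : IsProbabilityMeasure (μ.map Y) := Measure.isProbabilityMeasure_map hYm.aemeasurable
    symm
    refine ext_of_cylinder_le fun F t => ?_
    have hCm := measurableSet_cylinder_eq F t
    rw [Measure.map_apply hYm hCm]
    obtain ⟨I, hI⟩ := F.exists_nat_subset_range
    set Bad : ℕ → Set (ℕ → K) := fun R =>
      {d | ¬ ((∀ l < R, good (d l)) ∧ ∀ j < I, 0 ≤ ∑ l ∈ Finset.Ico j R, e (d l))} with hBad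
    have hBm : ∀ R, MeasurableSet (Bad R) := by
      intro R
      have hg : MeasurableSet {k | good k} := MeasurableSet.of_discrete
      have h1 : MeasurableSet {d : ℕ → K | ∀ l < R, good (d l)} := by
        simp only [Set.ofPred_forall]
        exact MeasurableSet.iInter fun l => MeasurableSet.iInter fun _ => measurable_pi_apply l hg
      have h2 : MeasurableSet {d : ℕ → K | ∀ j < I, 0 ≤ ∑ l ∈ Finset.Ico j R, e (d l)} := by
        simp only [Set.ofPred_forall]
        refine MeasurableSet.iInter fun j => MeasurableSet.iInter fun _ =>
          measurableSet_le measurable_const ?_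
        exact Finset.measurable_sum _ fun l _ => (Measurable.of_discrete (f := e)).comp
          (measurable_pi_apply l)
      exact (h1.inter h2).compl
    have hlim : Tendsto (fun R => ρp (Bad R)) atTop (nhds 0) := by
      have hae : ∀ᵐ d ∂ρp, ∀ᶠ R in atTop, d ∉ Bad R := by
        have hg : ∀ᵐ d ∂ρp, ∀ l : ℕ, good (d l) := by
          rw [ae_all_iff]
          intro l
          exact (measurePreserving_eval_infinitePi (fun _ : ℕ => ρ) l).quasiMeasurePreserving.ae
            hgood
        filter_upwards [hg, ae_eventually_sum_nonneg ρ (e := fun k => (e k : ℝ))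
          Measurable.of_discrete he hpos] with d h1 h2
        have h3 : ∀ᶠ R in atTop, ∀ j ∈ Finset.range I, 0 ≤ ∑ l ∈ Finset.Ico j R, (e (d l) : ℝ) :=
          (Finset.eventually_all _).2 fun j _ => h2 j
        filter_upwards [h3] with R hR
        simp only [hBad, Set.mem_ofPred_eq, not_not]
        exact ⟨fun l _ => h1 l, fun j hj => by exact_mod_cast hR j (Finset.mem_range.2 hj)⟩
      have := tendsto_measure_of_ae_tendsto_indicator_of_isFiniteMeasure (μ := ρp) (L := atTop)
        (A := ∅) (As := Bad) MeasurableSet.empty hBm (by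
          filter_upwards [hae] with d hd
          filter_upwards [hd] with R hR
          simp [hR])
      simpa using this
    have hbound : ∀ᶠ R in atTop, νp {y | ∀ i ∈ F, y i = t i} ≤
        μ (Y ⁻¹' {y | ∀ i ∈ F, y i = t i}) + ρp (Bad R) := by
      filter_upwards [eventually_ge_atTop I] with R hR
      set Big : Measure (X × (ℝ × ((ℕ → B) × (ℕ → K)))) := μ.prod (unif.prod (νp.prod ρp))
      have p1 : MeasurePreserving (fun z : X × (ℝ × ((ℕ → B) × (ℕ → K))) =>
          (back bl nx T R z.1 (z.2.1, z.2.2.1)).2) Big νp :=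
        measurePreserving_snd.comp ((hTback R).comp ((MeasurePreserving.id μ).prod
          ((MeasurePreserving.id unif).prod measurePreserving_fst)))
      have p2 : MeasurePreserving (fun z : X × (ℝ × ((ℕ → B) × (ℕ → K))) =>
          (back bl nx E R z.1 (z.2.1, z.2.2.2)).2) Big ρp :=
        measurePreserving_snd.comp ((hEback R).comp ((MeasurePreserving.id μ).prod
          ((MeasurePreserving.id unif).prod measurePreserving_snd)))
      have p3 : MeasurePreserving (fun z : X × (ℝ × ((ℕ → B) × (ℕ → K))) => z.1) Big μ :=
        measurePreserving_fst
      have p4 : MeasurePreserving (fun z : X × (ℝ × ((ℕ → B) × (ℕ → K))) => z.2.1) Big unif :=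
        measurePreserving_fst.comp measurePreserving_snd
      rw [← p1.measure_preimage hCm.nullMeasurableSet,
        ← p3.measure_preimage (hYm hCm).nullMeasurableSet,
        ← p2.measure_preimage (hBm R).nullMeasurableSet]
      refine (measure_mono_ae (t := _ ∪ _) ?_).trans (measure_union_le _ _)
      filter_upwards [p4.quasiMeasurePreserving.ae ae_unif_mem]
      rintro ⟨x, s, y, d⟩ hs hx
      by_cases hb : (back bl nx E R x (s, d)).2 ∈ Bad R
      · exact Or.inr hb
      left
      simp only [hBad, Set.mem_ofPred_eq, not_not] at hb
      intro i hi
      have hiI : i < I := Finset.mem_range.1 (hI hi)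
      rw [← hx i hi]
      apply hYeq
      filter_upwards [eventually_ge_atTop R] with R' hR'
      obtain ⟨m, rfl⟩ := Nat.exists_eq_add_of_le hR'
      simp only [ho, back_add]
      have hmem : ∀ m x, (back bl nx T m x (0, fun _ => b₀)).1 ∈ Set.Ico (0 : ℝ) 1 := by
        intro m
        induction m with
        | zero => intro x; simp [back]
        | succ m ih => intro x; exact hst _ _ (ih (nx x))
      exact (out_determined hdet (fun u s => by rw [hlen]; exact hlen0 u)
        (agree_zero hs (hmem m (nx^[R] x))) d y _ i R x (by omega) hb.1
        (fun j hj => hb.2 j (by omega))).symm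
    refine ge_of_tendsto ?_ hbound
    simpa using hlim.const_add (μ (Y ⁻¹' {y | ∀ i ∈ F, y i = t i}))
  · intro x i hi
    have key : ∀ R, o (R + 1) x i = o R (nx x) (i - len (bl x)) := by
      intro R
      simp only [ho, back, hT, fibre]
      rw [prepend_of_length_le _ _ (by rw [hlen]; exact hi), hlen]
    have hiff : ∀ b, (∀ᶠ R in atTop, o R x i = b) ↔
        ∀ᶠ R in atTop, o R (nx x) (i - len (bl x)) = b := by
      intro b
      conv_lhs => rw [← map_add_atTop_eq_nat 1, eventually_map]
      simp only [key]
    simp only [Y, hiff]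

instance {α : Type*} : MeasurableSpace (List α) := ⊤

instance {α : Type*} : DiscreteMeasurableSpace (List α) := ⟨fun _ => trivial⟩

/-- The first `n` symbols of a one-sided sequence. -/
def pfx {A : Type*} (n : ℕ) (x : ℕ → A) : List A := List.ofFn fun i : Fin n => x i

/-- Remove the first `n` symbols of a one-sided sequence. -/
def dropS {A : Type*} (n : ℕ) (x : ℕ → A) : ℕ → A := fun i => x (n + i)

@[simp] lemma length_pfx {A : Type*} (n : ℕ) (x : ℕ → A) : (pfx n x).length = n := by simp [pfx]

lemma pfx_succ {A : Type*} (n : ℕ) (x : ℕ → A) : pfx (n + 1) x = x 0 :: pfx n (stail x) := by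
  simp [pfx, stail, List.ofFn_succ]

@[simp] lemma dropS_zero {A : Type*} (x : ℕ → A) : dropS 0 x = x := by
  funext i
  simp [dropS]

lemma dropS_succ {A : Type*} (n : ℕ) (x : ℕ → A) : dropS (n + 1) x = dropS n (stail x) := by
  funext i
  simp [dropS, stail, Nat.add_right_comm]

lemma dropS_dropS {A : Type*} (m n : ℕ) (x : ℕ → A) : dropS m (dropS n x) = dropS (n + m) x := by
  funext i
  simp [dropS, Nat.add_assoc]

lemma pfx_eq_pfx_iff {A : Type*} {n : ℕ} {x x' : ℕ → A} :
    pfx n x = pfx n x' ↔ ∀ i < n, x i = x' i := by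
  simp only [pfx, List.ofFn_inj, funext_iff, Fin.forall_iff]

lemma prepend_pfx_dropS {A : Type*} (n : ℕ) (x : ℕ → A) : prepend (pfx n x) (dropS n x) = x := by
  induction n generalizing x with
  | zero => simp [pfx, prepend]
  | succ n ih =>
    rw [pfx_succ, dropS_succ, prepend, ih]
    funext i
    cases i <;> rfl

lemma measurable_pfx {A : Type*} [MeasurableSpace A] [Countable A] [DiscreteMeasurableSpace A]
    (n : ℕ) : Measurable (pfx n : (ℕ → A) → List A) := by
  have h : Measurable fun (x : ℕ → A) (i : Fin n) => x i :=
    measurable_pi_iff.2 fun i => measurable_pi_apply (i : ℕ)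
  exact (Measurable.of_discrete (f := fun v : Fin n → A => List.ofFn v)).comp h

lemma measurable_dropS {A : Type*} [MeasurableSpace A] (n : ℕ) :
    Measurable (dropS n : (ℕ → A) → ℕ → A) :=
  measurable_pi_iff.2 fun i => measurable_pi_apply (n + i)

/-- `E` depends only on the first `n` symbols. -/
def DependsOnPfx {A : Type*} (n : ℕ) (E : Set (ℕ → A)) : Prop :=
  ∀ x x', (∀ i < n, x i = x' i) → x ∈ E → x' ∈ E

lemma DependsOnPfx.eq_preimage {A : Type*} {n : ℕ} {E : Set (ℕ → A)} (h : DependsOnPfx n E) :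
    E = pfx n ⁻¹' (pfx n '' E) := by
  refine Set.Subset.antisymm (Set.subset_preimage_image _ _) ?_
  rintro x ⟨x', hx', he⟩
  exact h x' x (pfx_eq_pfx_iff.1 he) hx'

section Product

variable {A : Type*} [MeasurableSpace A] [Countable A] [DiscreteMeasurableSpace A]
  (π : Measure A) [IsProbabilityMeasure π]

lemma infinitePi_pfx_dropS (u : List A) {S : Set (ℕ → A)} (hS : MeasurableSet S) :
    (Measure.infinitePi fun _ : ℕ => π) {x | pfx u.length x = u ∧ dropS u.length x ∈ S} =
      (u.map fun a => π {a}).prod * (Measure.infinitePi fun _ : ℕ => π) S := by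
  induction u with
  | nil => simp [pfx]
  | cons a u ih =>
    have hm : MeasurableSet {x | pfx u.length x = u ∧ dropS u.length x ∈ S} :=
      (measurable_pfx u.length (MeasurableSet.singleton u)).inter (measurable_dropS _ hS)
    have : {x | pfx (a :: u).length x = a :: u ∧ dropS (a :: u).length x ∈ S} =
        (fun y : ℕ → A => (y 0, stail y)) ⁻¹'
          ({a} ×ˢ {x | pfx u.length x = u ∧ dropS u.length x ∈ S}) := by
      ext x
      simp only [List.length_cons, pfx_succ, dropS_succ, List.cons.injEq, Set.mem_ofPred_eq,
        Set.mem_preimage, Set.mem_prod, Set.mem_singleton_iff, and_assoc]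
    rw [this, (measurePreserving_uncons π).measure_preimage
      ((MeasurableSet.singleton a).prod hm).nullMeasurableSet, Measure.prod_prod, ih]
    simp [mul_assoc]

lemma infinitePi_pfx (u : List A) :
    (Measure.infinitePi fun _ : ℕ => π) {x | pfx u.length x = u} = (u.map fun a => π {a}).prod := by
  simpa using infinitePi_pfx_dropS π u MeasurableSet.univ

lemma measurePreserving_pfx_dropS (n : ℕ) :
    MeasurePreserving (fun x : ℕ → A => (pfx n x, dropS n x)) (Measure.infinitePi fun _ : ℕ => π)
      (((Measure.infinitePi fun _ : ℕ => π).map (pfx n)).prod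
        (Measure.infinitePi fun _ : ℕ => π)) := by
  have hm := (measurable_pfx (A := A) n).prodMk (measurable_dropS n)
  have : IsProbabilityMeasure ((Measure.infinitePi fun _ : ℕ => π).map (pfx n)) :=
    Measure.isProbabilityMeasure_map (measurable_pfx n).aemeasurable
  refine ⟨hm, ext_prod_countable fun u S hS => ?_⟩
  rw [Measure.map_apply hm ((MeasurableSet.singleton u).prod hS), Measure.prod_prod,
    Measure.map_apply (measurable_pfx n) (MeasurableSet.singleton u)]
  by_cases h : u.length = n
  · subst h
    exact (infinitePi_pfx_dropS π u hS).trans (by rw [← infinitePi_pfx]; rfl)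
  · have h1 : (pfx n : (ℕ → A) → List A) ⁻¹' {u} = ∅ := by
      ext x
      simp only [Set.mem_preimage, Set.mem_singleton_iff, Set.mem_empty_iff_false, iff_false]
      rintro rfl
      simp at h
    have h2 : (fun x : ℕ → A => (pfx n x, dropS n x)) ⁻¹' ({u} ×ˢ S) = ∅ := by
      rw [← Set.subset_empty_iff, ← h1]
      exact fun x hx => hx.1
    simp [h1, h2]

lemma DependsOnPfx.measurableSet {n : ℕ} {E : Set (ℕ → A)} (h : DependsOnPfx n E) :
    MeasurableSet E := by
  rw [h.eq_preimage]
  exact measurable_pfx n MeasurableSet.of_discrete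

lemma DependsOnPfx.measure_inter {n : ℕ} {E S : Set (ℕ → A)} (h : DependsOnPfx n E)
    (hS : MeasurableSet S) :
    (Measure.infinitePi fun _ : ℕ => π) (E ∩ dropS n ⁻¹' S) =
      (Measure.infinitePi fun _ : ℕ => π) E * (Measure.infinitePi fun _ : ℕ => π) S := by
  have : IsProbabilityMeasure ((Measure.infinitePi fun _ : ℕ => π).map (pfx n)) :=
    Measure.isProbabilityMeasure_map (measurable_pfx n).aemeasurable
  have := (measurePreserving_pfx_dropS π n).measure_preimage
    ((MeasurableSet.of_discrete (s := pfx n '' E)).prod hS).nullMeasurableSet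
  rw [Measure.prod_prod, Measure.map_apply (measurable_pfx n) MeasurableSet.of_discrete,
    ← h.eq_preimage, Set.mk_preimage_prod, ← h.eq_preimage] at this
  exact this

end Product

section Marker

variable {A : Type*} (a b : A) (k : ℕ)

/-- The marker word `a ⋯ a b` (with `k` copies of `a`) ends right before position `n`. -/
def Mk (n : ℕ) (x : ℕ → A) : Prop :=
  ∃ m, n = m + (k + 1) ∧ (∀ j < k, x (m + j) = a) ∧ x (m + k) = b

/-- No marker ends at a position at most `m`. -/
def noMk (m : ℕ) : Set (ℕ → A) := {x | ∀ n ≤ m, ¬ Mk a b k n x}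

open Classical in
/-- The length of the block up to and including the first marker. -/
def bLen (x : ℕ → A) : ℕ := if h : ∃ n, Mk a b k n x then Nat.find h else 1

/-- The block of `x` up to and including the first marker. -/
def blk (x : ℕ → A) : List A := pfx (bLen a b k x) x

/-- What remains of `x` after its first block. -/
def nxt (x : ℕ → A) : ℕ → A := dropS (bLen a b k x) x

/-- The words that occur as first blocks of sequences containing a marker. -/
def properBlocks : Set (List A) := {u | ∃ x, (∃ n, Mk a b k n x) ∧ blk a b k x = u}

variable {a b k}

lemma Mk.congr {n : ℕ} {x x' : ℕ → A} (h : ∀ i < n, x i = x' i) (hx : Mk a b k n x) :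
    Mk a b k n x' := by
  obtain ⟨m, rfl, h1, h2⟩ := hx
  exact ⟨m, rfl, fun j hj => by rw [← h1 j hj, h _ (by omega)], by rw [← h2, h _ (by omega)]⟩

lemma Mk.lt {n : ℕ} {x : ℕ → A} (hx : Mk a b k n x) : k < n := by
  obtain ⟨m, rfl, -⟩ := hx
  omega

lemma dependsOnPfx_noMk (m : ℕ) : DependsOnPfx m (noMk a b k m) :=
  fun _ _ h hx n hn hm => hx n hn (hm.congr fun i hi => (h i (by omega)).symm)

lemma bLen_eq_iff {x : ℕ → A} (hx : ∃ n, Mk a b k n x) (n : ℕ) :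
    bLen a b k x = n ↔ Mk a b k n x ∧ ∀ m < n, ¬ Mk a b k m x := by
  classical
  rw [bLen, dif_pos hx, Nat.find_eq_iff]

lemma bLen_spec {x : ℕ → A} (hx : ∃ n, Mk a b k n x) : Mk a b k (bLen a b k x) x :=
  ((bLen_eq_iff hx _).1 rfl).1

lemma bLen_pos (x : ℕ → A) : 0 < bLen a b k x := by
  by_cases hx : ∃ n, Mk a b k n x
  · exact (Nat.zero_le k).trans_lt (bLen_spec hx).lt
  · simp [bLen, hx]

lemma lt_bLen_iff {x : ℕ → A} (hx : ∃ n, Mk a b k n x) (i : ℕ) :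
    i < bLen a b k x ↔ x ∈ noMk a b k i := by
  constructor
  · exact fun h n hn => ((bLen_eq_iff hx _).1 rfl).2 n (by omega)
  · intro h
    by_contra hc
    exact h _ (not_lt.1 hc) (bLen_spec hx)

lemma bLen_congr {x x' : ℕ → A} (hx : ∃ n, Mk a b k n x)
    (h : ∀ i < bLen a b k x, x i = x' i) :
    (∃ n, Mk a b k n x') ∧ bLen a b k x' = bLen a b k x := by
  have h1 := (bLen_spec hx).congr h
  refine ⟨⟨_, h1⟩, (bLen_eq_iff ⟨_, h1⟩ _).2 ⟨h1, fun m hm hc => ?_⟩⟩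
  exact ((bLen_eq_iff hx _).1 rfl).2 m hm (hc.congr fun i hi => (h i (by omega)).symm)

lemma disjoint_noMk_inter (hab : b ≠ a) {m m' : ℕ} (hm : m < m') :
    Disjoint (noMk a b k m ∩ dropS m ⁻¹' {x | Mk a b k (k + 1) x})
      (noMk a b k m' ∩ dropS m' ⁻¹' {x | Mk a b k (k + 1) x}) := by
  rw [Set.disjoint_left]
  rintro x ⟨-, h1⟩ ⟨h2, h3⟩
  obtain ⟨n, hn, ha, hb⟩ := h1
  obtain ⟨n', hn', ha', hb'⟩ := h3
  obtain rfl : n = 0 := by omega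
  obtain rfl : n' = 0 := by omega
  simp only [dropS, zero_add] at ha hb ha' hb'
  rcases le_or_gt (m + (k + 1)) m' with hle | hgt
  · exact h2 _ hle ⟨m, rfl, ha, hb⟩
  · have := ha' (m + k - m') (by omega)
    rw [show m' + (m + k - m') = m + k by omega, hb] at this
    exact hab this

lemma sum_map_blk {M : Type*} [AddCommMonoid M] (g : A → M) (x : ℕ → A) :
    ((blk a b k x).map g).sum = ∑ i ∈ Finset.range (bLen a b k x), g (x i) := by
  rw [blk, pfx, List.map_ofFn, List.sum_ofFn, Finset.sum_range]
  rfl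

lemma blk_eq_iff {x₀ : ℕ → A} (h₀ : ∃ n, Mk a b k n x₀) (x : ℕ → A) :
    blk a b k x = blk a b k x₀ ↔ pfx (blk a b k x₀).length x = blk a b k x₀ := by
  simp only [blk, length_pfx]
  constructor
  · intro h
    have hl := congrArg List.length h
    simp only [length_pfx] at hl
    rw [← h, hl]
  · intro h
    rw [(bLen_congr h₀ fun i hi => (pfx_eq_pfx_iff.1 h i hi).symm).2, h]

variable [MeasurableSpace A] [Countable A] [DiscreteMeasurableSpace A]
  (π : Measure A) [IsProbabilityMeasure π]

lemma measurableSet_Mk (n : ℕ) : MeasurableSet {x | Mk a b k n x} :=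
  DependsOnPfx.measurableSet (n := n) fun _ _ h hx => Mk.congr h hx

lemma measurableSet_found : MeasurableSet {x | ∃ n, Mk a b k n x} := by
  rw [Set.ofPred_exists]
  exact MeasurableSet.iUnion fun n => measurableSet_Mk n

lemma measurable_bLen : Measurable (bLen a b k : (ℕ → A) → ℕ) := by
  refine measurable_to_countable' fun n => ?_
  have : (bLen a b k : (ℕ → A) → ℕ) ⁻¹' {n} =
      ({x | Mk a b k n x} ∩ ⋂ m, ⋂ (_ : m < n), {x | Mk a b k m x}ᶜ) ∪
        ({x | ∃ n, Mk a b k n x}ᶜ ∩ {_x | n = 1}) := by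
    ext x
    simp only [Set.mem_preimage, Set.mem_singleton_iff, Set.mem_union, Set.mem_inter_iff,
      Set.mem_ofPred_eq, Set.mem_iInter, Set.mem_compl_iff]
    by_cases hx : ∃ n, Mk a b k n x
    · simp only [hx, not_true_eq_false, false_and, or_false]
      exact bLen_eq_iff hx n
    · have h1 : bLen a b k x = 1 := by simp [bLen, hx]
      simp only [h1, hx, not_false_eq_true, true_and]
      constructor
      · exact fun h => Or.inr h.symm
      · rintro (⟨h, -⟩ | h)
        · exact absurd ⟨n, h⟩ hx
        · exact h.symm
  rw [this]
  exact ((measurableSet_Mk n).inter (MeasurableSet.iInter fun m => MeasurableSet.iInter fun _ =>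
    (measurableSet_Mk m).compl)).union (measurableSet_found.compl.inter (MeasurableSet.const _))

lemma measurable_blk : Measurable (blk a b k : (ℕ → A) → List A) := by
  have h : Measurable fun z : ℕ × (ℕ → A) => pfx z.1 z.2 :=
    measurable_from_prod_countable_right fun n => measurable_pfx n
  exact h.comp (measurable_bLen.prodMk measurable_id)

lemma measurable_nxt : Measurable (nxt a b k : (ℕ → A) → ℕ → A) := by
  have h : Measurable fun z : ℕ × (ℕ → A) => dropS z.1 z.2 :=
    measurable_from_prod_countable_right fun n => measurable_dropS n
  exact h.comp (measurable_bLen.prodMk measurable_id)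

variable (a b k)

lemma tsum_noMk_lt_top (hab : b ≠ a) (ha0 : π {a} ≠ 0) (hb0 : π {b} ≠ 0) :
    ∑' m, (Measure.infinitePi fun _ : ℕ => π) (noMk a b k m) < ∞ := by
  set μ : Measure (ℕ → A) := Measure.infinitePi fun _ : ℕ => π
  set c := μ {x | Mk a b k (k + 1) x} with hc
  have hc0 : c ≠ 0 := by
    have h1 := infinitePi_pfx π (List.replicate k a ++ [b])
    have h2 : {x : ℕ → A | pfx (List.replicate k a ++ [b]).length x = List.replicate k a ++ [b]} ⊆
        {x | Mk a b k (k + 1) x} := by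
      intro x hx
      have hx' : pfx (k + 1) x = List.replicate k a ++ [b] := by simpa using hx
      have hget : ∀ j (hj : j < k + 1), x j = (List.replicate k a ++ [b])[j]'(by simp; omega) := by
        intro j hj
        simp only [← hx', pfx, List.getElem_ofFn]
      refine ⟨0, by omega, fun j hj => ?_, ?_⟩
      · rw [zero_add, hget j (by omega)]
        simp [hj]
      · rw [zero_add, hget k (by omega)]
        simp
    intro h0
    have := (measure_mono h2).trans_eq h0
    rw [h1] at this
    simp [ha0, hb0] at this
  have hsum : ∑' m, μ (noMk a b k m) * c ≤ 1 := by
    have heq : ∀ m, μ (noMk a b k m) * c =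
        μ (noMk a b k m ∩ dropS m ⁻¹' {x | Mk a b k (k + 1) x}) := fun m =>
      ((dependsOnPfx_noMk m).measure_inter π (measurableSet_Mk _)).symm
    simp only [heq]
    rw [← measure_iUnion]
    · exact prob_le_one
    · intro m m' hne
      rcases lt_or_gt_of_ne hne with h | h
      · exact disjoint_noMk_inter hab h
      · exact (disjoint_noMk_inter hab h).symm
    · exact fun m => (dependsOnPfx_noMk m).measurableSet.inter
        (measurable_dropS m (measurableSet_Mk _))
  rw [ENNReal.tsum_mul_right] at hsum
  by_contra h
  rw [not_lt_top_iff.1 h, ENNReal.top_mul hc0] at hsum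
  simp at hsum

lemma ae_found (hab : b ≠ a) (ha0 : π {a} ≠ 0) (hb0 : π {b} ≠ 0) :
    ∀ᵐ x ∂(Measure.infinitePi fun _ : ℕ => π), ∃ n, Mk a b k n x := by
  have hlim := ENNReal.tendsto_atTop_zero_of_tsum_ne_top (tsum_noMk_lt_top a b k π hab ha0 hb0).ne
  have hle : ∀ m, (Measure.infinitePi fun _ : ℕ => π) {x | ¬ ∃ n, Mk a b k n x} ≤
      (Measure.infinitePi fun _ : ℕ => π) (noMk a b k m) := fun m =>
    measure_mono fun x hx n _ hn => hx ⟨n, hn⟩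
  exact le_antisymm (ge_of_tendsto' hlim hle) zero_le

/-- Wald's identity for the first block. -/
lemma lintegral_sum_bLen (hab : b ≠ a) (ha0 : π {a} ≠ 0) (hb0 : π {b} ≠ 0) (g : A → ℝ≥0∞) :
    ∫⁻ x, ∑ i ∈ Finset.range (bLen a b k x), g (x i) ∂(Measure.infinitePi fun _ : ℕ => π) =
      (∑' m, (Measure.infinitePi fun _ : ℕ => π) (noMk a b k m)) * ∫⁻ s, g s ∂π := by
  set μ : Measure (ℕ → A) := Measure.infinitePi fun _ : ℕ => π with hμ
  have h1 : ∫⁻ x, ∑ i ∈ Finset.range (bLen a b k x), g (x i) ∂μ =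
      ∫⁻ x, ∑' i, (noMk a b k i).indicator 1 x * g (x i) ∂μ := by
    refine lintegral_congr_ae ?_
    filter_upwards [ae_found a b k π hab ha0 hb0] with x hx
    rw [tsum_eq_sum (s := Finset.range (bLen a b k x))]
    · refine Finset.sum_congr rfl fun i hi => ?_
      rw [Set.indicator_of_mem ((lt_bLen_iff hx i).1 (Finset.mem_range.1 hi))]
      simp
    · intro i hi
      rw [Set.indicator_of_notMem]
      · simp
      · rwa [← lt_bLen_iff hx, ← Finset.mem_range]
  have hgm : Measurable g := Measurable.of_discrete
  rw [h1, lintegral_tsum fun i => ?_, ← ENNReal.tsum_mul_right]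
  · refine tsum_congr fun i => ?_
    have : IsProbabilityMeasure (μ.map (pfx i)) :=
      Measure.isProbabilityMeasure_map (measurable_pfx i).aemeasurable
    have hmp := measurePreserving_pfx_dropS π i
    have hind : Measurable ((pfx i '' noMk a b k i).indicator (1 : List A → ℝ≥0∞)) :=
      Measurable.of_discrete
    have hcomp := hmp.lintegral_comp (f := fun z : List A × (ℕ → A) =>
        (pfx i '' noMk a b k i).indicator 1 z.1 * g (z.2 0))
      ((hind.comp measurable_fst).mul (hgm.comp ((measurable_pi_apply 0).comp measurable_snd)))
    have hg0 : Measurable fun y : ℕ → A => g (y 0) := hgm.comp (measurable_pi_apply 0)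
    rw [lintegral_prod_mul hind.aemeasurable hg0.aemeasurable] at hcomp
    have e1 : ∀ x, (noMk a b k i).indicator (1 : (ℕ → A) → ℝ≥0∞) x =
        (pfx i '' noMk a b k i).indicator 1 (pfx i x) := by
      intro x
      conv_lhs => rw [(dependsOnPfx_noMk (a := a) (b := b) (k := k) i).eq_preimage]
      rfl
    have e2 : ∫⁻ y : ℕ → A, g (y 0) ∂μ = ∫⁻ s, g s ∂π :=
      (measurePreserving_eval_infinitePi (fun _ : ℕ => π) 0).lintegral_comp hgm
    have e3 : ∫⁻ u, (pfx i '' noMk a b k i).indicator 1 u ∂(μ.map (pfx i)) =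
        μ (noMk a b k i) := by
      rw [lintegral_indicator_one MeasurableSet.of_discrete,
        Measure.map_apply (measurable_pfx i) MeasurableSet.of_discrete,
        ← (dependsOnPfx_noMk i).eq_preimage]
    simp only [← hμ] at hcomp
    rw [e2, e3] at hcomp
    rw [← hcomp]
    refine lintegral_congr fun x => ?_
    rw [e1]
    simp [dropS]
  · exact ((measurable_one.indicator (dependsOnPfx_noMk i).measurableSet).mul
      (hgm.comp (measurable_pi_apply i))).aemeasurable

/-- The distribution of the first block. -/
lemma map_blk_singleton (hab : b ≠ a) (ha0 : π {a} ≠ 0) (hb0 : π {b} ≠ 0) (u : List A) :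
    (Measure.infinitePi fun _ : ℕ => π).map (blk a b k) {u} =
      (properBlocks a b k).indicator
        (fun u => (u.map fun s => π {s}).prod) u := by
  rw [Measure.map_apply measurable_blk (MeasurableSet.singleton u)]
  by_cases hu : u ∈ properBlocks a b k
  · rw [Set.indicator_of_mem hu, ← infinitePi_pfx]
    obtain ⟨x₀, h₀, rfl⟩ := hu
    exact congrArg _ (Set.ext fun x => blk_eq_iff h₀ x)
  · rw [Set.indicator_of_notMem hu]
    rw [measure_eq_zero_iff_ae_notMem]
    filter_upwards [ae_found a b k π hab ha0 hb0] with x hx hxu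
    exact hu ⟨x, hx, hxu⟩

/-- The first block is independent of the remaining sequence. -/
lemma measurePreserving_blk_nxt (hab : b ≠ a) (ha0 : π {a} ≠ 0) (hb0 : π {b} ≠ 0) :
    MeasurePreserving (fun x => (blk a b k x, nxt a b k x)) (Measure.infinitePi fun _ : ℕ => π)
      (((Measure.infinitePi fun _ : ℕ => π).map (blk a b k)).prod
        (Measure.infinitePi fun _ : ℕ => π)) := by
  have hm := (measurable_blk (a := a) (b := b) (k := k)).prodMk
    (measurable_nxt (a := a) (b := b) (k := k))
  refine ⟨hm, ext_prod_countable fun u S hS => ?_⟩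
  have : IsProbabilityMeasure ((Measure.infinitePi fun _ : ℕ => π).map (blk a b k)) :=
    Measure.isProbabilityMeasure_map measurable_blk.aemeasurable
  rw [Measure.map_apply hm ((MeasurableSet.singleton u).prod hS), Measure.prod_prod,
    map_blk_singleton a b k π hab ha0 hb0]
  by_cases hu : u ∈ properBlocks a b k
  · rw [Set.indicator_of_mem hu, ← infinitePi_pfx_dropS π u hS]
    obtain ⟨x₀, h₀, rfl⟩ := hu
    refine congrArg _ (Set.ext fun x => ?_)
    change (blk a b k x = blk a b k x₀ ∧ nxt a b k x ∈ S) ↔ _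
    rw [blk_eq_iff h₀ x]
    refine and_congr_right fun h => ?_
    have := (blk_eq_iff h₀ x).2 h
    rw [← this]
    simp [nxt, blk]
  · rw [Set.indicator_of_notMem hu, zero_mul]
    rw [measure_eq_zero_iff_ae_notMem]
    filter_upwards [ae_found a b k π hab ha0 hb0] with x hx hxu
    exact hu ⟨x, hx, hxu.1⟩

end Marker

open Classical in
/-- The elements of a finite set can be labelled by fair bit strings of nearly optimal
total length: `n u` is the length of the string of `u`, and `k u` the number it encodes. -/
lemma exists_fair_labels {α : Type*} (K : ℕ) (C : Finset α) (hC : C.card < 2 ^ K) :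
    ∃ n k : α → ℕ, (∀ u, k u < 2 ^ n u) ∧ (∀ u, n u ≤ K) ∧
      (∀ N j j', j < 2 ^ N → j' < 2 ^ N →
        (C.filter fun u => n u = N ∧ k u = j).card =
          (C.filter fun u => n u = N ∧ k u = j').card) ∧
      K * C.card ≤ ∑ u ∈ C, n u + 2 ^ (K + 1) := by
  induction K generalizing C with
  | zero =>
    have hC0 : C = ∅ := by simpa using hC
    exact ⟨fun _ => 0, fun _ => 0, by simp, by simp, by simp [hC0], by simp⟩
  | succ K ih =>
    rcases lt_or_ge C.card (2 ^ K) with h | h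
    · obtain ⟨n, k, h1, h2, h3, h4⟩ := ih C h
      refine ⟨n, k, h1, fun u => (h2 u).trans (Nat.le_succ K), h3, ?_⟩
      have e1 : 2 ^ (K + 1 + 1) = 4 * 2 ^ K := by ring
      have e2 : 2 ^ (K + 1) = 2 * 2 ^ K := by ring
      rw [e2] at h4
      rw [e1, add_mul, one_mul]
      omega
    · obtain ⟨D, hDC, hD⟩ := Finset.exists_subset_card_eq h
      have hcard : (C \ D).card + 2 ^ K = C.card := by
        rw [← hD]
        exact Finset.card_sdiff_add_card_eq_card hDC
      have e1 : 2 ^ (K + 1 + 1) = 4 * 2 ^ K := by ring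
      have e2 : 2 ^ (K + 1) = 2 * 2 ^ K := by ring
      obtain ⟨n, k, h1, h2, h3, h4⟩ := ih (C \ D) (by omega)
      have f : D ≃ Fin (2 ^ K) := D.equivFinOfCardEq hD
      set n' : α → ℕ := fun u => if u ∈ D then K else n u with hn'
      set k' : α → ℕ := fun u => if hu : u ∈ D then f ⟨u, hu⟩ else k u with hk'
      have hnD : ∀ u ∈ D, n' u = K := fun u hu => if_pos hu
      have hnC : ∀ u ∈ C \ D, n' u = n u := fun u hu => if_neg (Finset.mem_sdiff.1 hu).2
      have hkC : ∀ u ∈ C \ D, k' u = k u := fun u hu => dif_neg (Finset.mem_sdiff.1 hu).2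
      have hsplit : ∀ (p : α → Prop) [DecidablePred p], (C.filter p).card =
          ((C \ D).filter p).card + (D.filter p).card := by
        intro p _
        rw [← Finset.card_union_of_disjoint, ← Finset.filter_union,
          Finset.sdiff_union_of_subset hDC]
        exact Finset.disjoint_filter_filter Finset.sdiff_disjoint
      have hDcount : ∀ N j, j < 2 ^ N →
          (D.filter fun u => n' u = N ∧ k' u = j).card = if N = K then 1 else 0 := by
        intro N j hj
        split_ifs with hN
        · subst hN
          rw [Finset.card_eq_one]
          refine ⟨f.symm ⟨j, hj⟩, ?_⟩
          ext u
          simp only [Finset.mem_filter, Finset.mem_singleton]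
          constructor
          · rintro ⟨hu, -, hk⟩
            have : f ⟨u, hu⟩ = ⟨j, hj⟩ := by
              apply Fin.ext
              simpa [hk', hu] using hk
            rw [← this]
            simp
          · rintro rfl
            refine ⟨(f.symm ⟨j, hj⟩).2, hnD _ (f.symm ⟨j, hj⟩).2, ?_⟩
            simp [hk']
        · rw [Finset.card_eq_zero, Finset.filter_eq_empty_iff]
          rintro u hu ⟨h, -⟩
          exact hN (h.symm.trans (hnD u hu))
      refine ⟨n', k', fun u => ?_, fun u => ?_, fun N j j' hj hj' => ?_, ?_⟩
      · by_cases hu : u ∈ D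
        · simp [hn', hk', hu]
        · simpa [hn', hk', hu] using h1 u
      · by_cases hu : u ∈ D
        · simp [hn', hu]
        · simpa [hn', hu] using (h2 u).trans (Nat.le_succ K)
      · have hc : ∀ j, ((C \ D).filter fun u => n' u = N ∧ k' u = j) =
            (C \ D).filter fun u => n u = N ∧ k u = j := fun j =>
          Finset.filter_congr fun u hu => by rw [hnC u hu, hkC u hu]
        rw [hsplit, hsplit, hc, hc, hDcount N j hj, hDcount N j' hj', h3 N j j' hj hj']
      · rw [← Finset.sum_sdiff hDC, Finset.sum_congr rfl hnC, Finset.sum_congr rfl hnD]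
        simp only [Finset.sum_const, smul_eq_mul, hD]
        rw [e2] at h4
        rw [e1, ← hcard]
        nlinarith

/-- A countable probability space whose atoms within a class all have the same mass. -/
structure Classes {U T : Type*} [MeasurableSpace U] (P : Measure U) (κ : U → T) (w : T → ℝ)
    (D : T → Finset U) : Prop where
  pos : ∀ t, 0 < w t
  mem : ∀ t, ∀ u ∈ D t, κ u = t ∧ P {u} = ENNReal.ofReal (w t)
  null : ∀ u, u ∉ D (κ u) → P {u} = 0

lemma Classes.ae_mem {U T : Type*} [MeasurableSpace U] [Countable U] {P : Measure U}
    {κ : U → T} {w : T → ℝ} {D : T → Finset U} (h : Classes P κ w D) : ∀ᵐ u ∂P, u ∈ D (κ u) := by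
  rw [ae_iff_of_countable]
  exact fun u hu => by_contra fun hc => hu (h.null u hc)

section Classes

variable {U T : Type*} [MeasurableSpace U] [Countable U] [DiscreteMeasurableSpace U]
  {P : Measure U} {κ : U → T} {w : T → ℝ} {D : T → Finset U}

lemma Classes.measure_eq (h : Classes P κ w D) (t : T) (p : U → Prop) [DecidablePred p] :
    P {u | κ u = t ∧ p u} = ((D t).filter p).card * ENNReal.ofReal (w t) := by
  have : P {u | κ u = t ∧ p u} = P ((D t).filter p : Finset U) := by
    refine measure_congr ?_
    filter_upwards [h.ae_mem] with u hu
    refine propext ?_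
    change (κ u = t ∧ p u) ↔ u ∈ (((D t).filter p : Finset U) : Set U)
    simp only [Finset.coe_filter, Set.mem_ofPred_eq]
    exact ⟨fun ⟨h1, h2⟩ => ⟨h1 ▸ hu, h2⟩, fun ⟨h1, h2⟩ => ⟨(h.mem t u h1).1, h2⟩⟩
  rw [this, ← sum_measure_singleton, Finset.sum_congr rfl fun u hu =>
    (h.mem t u (Finset.mem_filter.1 hu).1).2]
  simp

lemma Classes.integral_nonneg [Countable T] (h : Classes P κ w D) {g : U → ℝ}
    (hg : Integrable g P) (hs : ∀ t, 0 ≤ ∑ u ∈ D t, g u) : 0 ≤ ∫ u, g u ∂P := by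
  have hd : Pairwise (Function.onFun Disjoint fun t => κ ⁻¹' {t}) := fun s t hst =>
    Set.disjoint_left.2 fun u h1 h2 => hst (h1.symm.trans h2)
  have hU : ⋃ t, κ ⁻¹' {t} = Set.univ := by
    ext u
    simp
  have := hasSum_integral_iUnion (μ := P) (f := g) (fun t => MeasurableSet.of_discrete) hd
    hg.integrableOn
  rw [hU, setIntegral_univ] at this
  refine this.nonneg fun t => ?_
  have heq : (κ ⁻¹' {t} : Set U) =ᵐ[P] (D t : Set U) := by
    filter_upwards [h.ae_mem] with u hu
    refine propext ?_
    change κ u = t ↔ u ∈ D t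
    exact ⟨fun h1 => h1 ▸ hu, fun h1 => (h.mem t u h1).1⟩
  rw [setIntegral_congr_set heq, setIntegral_finset _ hg.integrableOn]
  have : ∑ u ∈ D t, P.real {u} • g u = w t * ∑ u ∈ D t, g u := by
    rw [Finset.mul_sum]
    refine Finset.sum_congr rfl fun u hu => ?_
    rw [Measure.real, (h.mem t u hu).2, ENNReal.toReal_ofReal (h.pos t).le, smul_eq_mul]
  rw [this]
  exact mul_nonneg (h.pos t).le (hs t)

/-- Extraction of fair bits from a countable probability space. -/
lemma exists_extraction (P : Measure U) (κ : U → T) (w : T → ℝ) (D : T → Finset U)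
    (h : Classes P κ w D) :
    ∃ n k : U → ℕ, (∀ u, k u < 2 ^ n u) ∧ (∀ u, n u ≤ Nat.size (D (κ u)).card) ∧
      (∀ t N j j', j < 2 ^ N → j' < 2 ^ N →
        P {u | κ u = t ∧ n u = N ∧ k u = j} = P {u | κ u = t ∧ n u = N ∧ k u = j'}) ∧
      ∀ t, (D t).card * (Real.log (D t).card - 4 * Real.log 2) ≤
        Real.log 2 * ∑ u ∈ D t, (n u : ℝ) := by
  classical
  choose n k h1 h2 h3 h4 using fun t => exists_fair_labels (Nat.size (D t).card) (D t)
    (Nat.lt_size_self _)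
  refine ⟨fun u => n (κ u) u, fun u => k (κ u) u, fun u => h1 _ u, fun u => h2 _ u, ?_, ?_⟩
  · intro t N j j' hj hj'
    have e : ∀ j, {u | κ u = t ∧ n (κ u) u = N ∧ k (κ u) u = j} =
        {u | κ u = t ∧ (n t u = N ∧ k t u = j)} := by
      intro j
      ext u
      simp only [Set.mem_ofPred_eq]
      constructor <;>
      · rintro ⟨rfl, h⟩
        exact ⟨rfl, h⟩
    rw [e, e, h.measure_eq, h.measure_eq, h3 t N j j' hj hj']
  · intro t
    have hsum : ∑ u ∈ D t, (n (κ u) u : ℝ) = ((∑ u ∈ D t, n t u : ℕ) : ℝ) := by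
      push_cast
      exact Finset.sum_congr rfl fun u hu => by rw [(h.mem t u hu).1]
    rw [hsum]
    set c := (D t).card with hc
    set K := Nat.size c with hK
    rcases Nat.eq_zero_or_pos c with h0 | hpos
    · rw [h0]
      simp
      positivity
    have hlog : (0 : ℝ) < Real.log 2 := Real.log_pos (by norm_num)
    have hcK : Real.log c ≤ K * Real.log 2 := by
      rw [← Real.log_pow]
      exact Real.log_le_log (by exact_mod_cast hpos) (by exact_mod_cast (Nat.lt_size_self c).le)
    have hKc : (2 : ℝ) ^ (K + 1) ≤ 4 * c := by
      have hK0 : 0 < K := Nat.size_pos.2 hpos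
      have : 2 ^ (K - 1) ≤ c := Nat.lt_size.1 (by omega)
      have h' : 2 ^ (K + 1) = 4 * 2 ^ (K - 1) := by
        rw [show K + 1 = (K - 1) + 2 by omega, pow_add]
        ring
      exact_mod_cast (by omega : 2 ^ (K + 1) ≤ 4 * c)
    have h4' : (K : ℝ) * c ≤ ((∑ u ∈ D t, n t u : ℕ) : ℝ) + 2 ^ (K + 1) := by
      exact_mod_cast h4 t
    have hc0 : (0 : ℝ) ≤ c := Nat.cast_nonneg c
    nlinarith [mul_le_mul_of_nonneg_left hcK hc0, mul_le_mul_of_nonneg_left h4' hlog.le,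
      mul_le_mul_of_nonneg_left hKc hlog.le]

/-- Gibbs' inequality for extraction: the expected number of extracted bits is at least the
entropy up to the cost `-log R` of describing the class. -/
lemma Classes.integral_extraction [Countable T] [IsProbabilityMeasure P]
    [MeasurableSpace T] [DiscreteMeasurableSpace T]
    (h : Classes P κ w D) {n : U → ℕ}
    (hn : ∀ t, (D t).card * (Real.log (D t).card - 4 * Real.log 2) ≤
        Real.log 2 * ∑ u ∈ D t, (n u : ℝ))
    (R : Measure T) [IsProbabilityMeasure R] (hR : ∀ t, 0 < R.real {t})
    (hni : Integrable (fun u => (n u : ℝ)) P)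
    (hwi : Integrable (fun u => Real.log (w (κ u))) P)
    (hRi : Integrable (fun u => Real.log (R.real {κ u})) P) :
    -∫ u, Real.log (w (κ u)) ∂P + ∫ u, Real.log (R.real {κ u}) ∂P - 4 * Real.log 2 ≤
      Real.log 2 * ∫ u, (n u : ℝ) ∂P := by
  set q : U → ℝ := fun u => R.real {κ u} / ((D (κ u)).card * w (κ u)) with hq
  have hq0 : ∀ u, 0 ≤ q u := fun u => div_nonneg measureReal_nonneg
    (mul_nonneg (Nat.cast_nonneg _) (h.pos _).le)
  have hql : ∫⁻ u, ENNReal.ofReal (q u) ∂P ≤ 1 := by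
    have hκ : Measurable κ := Measurable.of_discrete
    have e : ∫⁻ u, ENNReal.ofReal (q u) ∂P = ∫⁻ t, ENNReal.ofReal
        (R.real {t} / ((D t).card * w t)) ∂(P.map κ) :=
      (lintegral_map (f := fun t => ENNReal.ofReal (R.real {t} / ((D t).card * w t)))
        Measurable.of_discrete hκ).symm
    rw [e, lintegral_countable']
    calc ∑' t, ENNReal.ofReal (R.real {t} / ((D t).card * w t)) * (P.map κ) {t}
        ≤ ∑' t, R {t} := by
          refine ENNReal.tsum_le_tsum fun t => ?_
          have hm : (P.map κ) {t} = ENNReal.ofReal ((D t).card * w t) := by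
            rw [Measure.map_apply hκ (MeasurableSet.singleton t)]
            have := h.measure_eq t fun _ => True
            simp only [and_true] at this
            rw [show κ ⁻¹' {t} = {u | κ u = t} from rfl, this,
              ENNReal.ofReal_mul (Nat.cast_nonneg _)]
            simp
          rw [hm, ← ENNReal.ofReal_mul (div_nonneg measureReal_nonneg
            (mul_nonneg (Nat.cast_nonneg _) (h.pos _).le)),
            ← ENNReal.ofReal_toReal (measure_ne_top R {t})]
          refine ENNReal.ofReal_le_ofReal ?_
          by_cases h0 : ((D t).card : ℝ) * w t = 0
          · rw [h0, mul_zero]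
            exact measureReal_nonneg
          · rw [div_mul_cancel₀ _ h0]
            rfl
      _ = 1 := by
          rw [← measure_univ (μ := R), ← lintegral_one, lintegral_countable']
          simp
  have hqi : Integrable q P :=
    ⟨Measurable.of_discrete.aestronglyMeasurable, by
      rw [hasFiniteIntegral_iff_ofReal (ae_of_all _ hq0)]
      exact hql.trans_lt one_lt_top⟩
  have hq1 : ∫ u, q u ∂P ≤ 1 := by
    rw [integral_eq_lintegral_of_nonneg_ae (ae_of_all _ hq0) hqi.1]
    exact ENNReal.toReal_le_of_le_ofReal zero_le_one (by simpa using hql)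
  have key := h.integral_nonneg (g := fun u => Real.log 2 * (n u : ℝ) + Real.log (w (κ u))
      + 4 * Real.log 2 - Real.log (R.real {κ u}) + (q u - 1))
    (((((hni.const_mul _).add hwi).add (integrable_const _)).sub hRi).add
      (hqi.sub (integrable_const _))) (by
    intro t
    rcases (D t).card.eq_zero_or_pos with h0 | hpos
    · rw [Finset.card_eq_zero.1 h0]
      simp
    have hc : (0 : ℝ) < (D t).card := by exact_mod_cast hpos
    have e : ∑ u ∈ D t, (Real.log 2 * (n u : ℝ) + Real.log (w (κ u)) + 4 * Real.log 2
        - Real.log (R.real {κ u}) + (q u - 1)) = Real.log 2 * ∑ u ∈ D t, (n u : ℝ) +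
        (D t).card * (Real.log (w t) + 4 * Real.log 2 - Real.log (R.real {t})
          + (R.real {t} / ((D t).card * w t) - 1)) := by
      rw [Finset.mul_sum, ← nsmul_eq_mul, ← Finset.sum_const, ← Finset.sum_add_distrib]
      refine Finset.sum_congr rfl fun u hu => ?_
      simp only [hq, (h.mem t u hu).1]
      ring
    rw [e]
    have hpos' : 0 < R.real {t} / ((D t).card * w t) :=
      div_pos (hR t) (mul_pos hc (h.pos t))
    have hlog := Real.log_le_sub_one_of_pos hpos'
    rw [Real.log_div (hR t).ne' (mul_pos hc (h.pos t)).ne',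
      Real.log_mul hc.ne' (h.pos t).ne'] at hlog
    nlinarith [hn t, mul_le_mul_of_nonneg_left hlog hc.le])
  have hi1 : Integrable (fun u => Real.log 2 * (n u : ℝ)) P := hni.const_mul _
  have hi2 : Integrable (fun u => Real.log 2 * (n u : ℝ) + Real.log (w (κ u))) P := hi1.add hwi
  have hi3 : Integrable (fun u => Real.log 2 * (n u : ℝ) + Real.log (w (κ u))
      + 4 * Real.log 2) P := hi2.add (integrable_const _)
  have hi4 : Integrable (fun u => Real.log 2 * (n u : ℝ) + Real.log (w (κ u))
      + 4 * Real.log 2 - Real.log (R.real {κ u})) P := hi3.sub hRi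
  have hi5 : Integrable (fun u => q u - 1) P := hqi.sub (integrable_const _)
  rw [integral_add hi4 hi5, integral_sub hi3 hRi, integral_add hi2 (integrable_const _),
    integral_add hi1 hwi, integral_sub hqi (integrable_const _), integral_const_mul] at key
  simp only [integral_const, probReal_univ, smul_eq_mul, one_mul] at key
  linarith

end Classes

lemma unif_preimage_affine {N : ℝ} (hN : 0 < N) (j : ℝ) {S : Set ℝ} (hS : MeasurableSet S) :
    unif ((fun s => (j + s) / N) ⁻¹' S) =
      ENNReal.ofReal N * volume (S ∩ Set.Ico (j / N) ((j + 1) / N)) := by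
  have hg : Measurable fun s : ℝ => (j + s) / N := by fun_prop
  have hset : (fun s => (j + s) / N) ⁻¹' S ∩ Set.Ico 0 1 =
      (fun s => j + s) ⁻¹' ((fun s => N⁻¹ * s) ⁻¹' (S ∩ Set.Ico (j / N) ((j + 1) / N))) := by
    ext s
    simp only [Set.mem_inter_iff, Set.mem_preimage, Set.mem_Ico]
    rw [inv_mul_eq_div, div_le_div_iff_of_pos_right hN, div_lt_div_iff_of_pos_right hN]
    simp
  rw [unif, Measure.restrict_apply (hg hS), hset, measure_preimage_add,
    Real.volume_preimage_mul_left (inv_ne_zero hN.ne'), inv_inv, abs_of_pos hN]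

lemma unif_digit {n : ℕ} {j : ℤ} (hj0 : 0 ≤ j) (hj : j < 2 ^ n) {S : Set ℝ}
    (hS : MeasurableSet S) :
    unif {s | ⌊(2 : ℝ) ^ n * s⌋ = j ∧ Int.fract ((2 : ℝ) ^ n * s) ∈ S} =
      (2 ^ n)⁻¹ * unif S := by
  set T : Set ℝ := {s | ⌊(2 : ℝ) ^ n * s⌋ = j ∧ Int.fract ((2 : ℝ) ^ n * s) ∈ S} with hT
  have hN : (0 : ℝ) < 2 ^ n := by positivity
  have hTm : MeasurableSet T := by
    refine MeasurableSet.inter ?_ ?_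
    · exact (measurableSet_singleton j).preimage
        (by fun_prop : Measurable fun s : ℝ => ⌊(2 : ℝ) ^ n * s⌋)
    · exact hS.preimage (by fun_prop)
  have hj0' : (0 : ℝ) ≤ j := by exact_mod_cast hj0
  have hj1' : (j : ℝ) + 1 ≤ 2 ^ n := by exact_mod_cast hj
  have key := unif_preimage_affine hN (j : ℝ) hTm
  have hsub : T ⊆ Set.Ico ((j : ℝ) / 2 ^ n) ((j + 1) / 2 ^ n) := by
    rintro s ⟨h, -⟩
    rw [Int.floor_eq_iff] at h
    rw [Set.mem_Ico, div_le_iff₀ hN, lt_div_iff₀ hN, mul_comm s]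
    exact h
  have hsub1 : T ⊆ Set.Ico 0 1 := hsub.trans (Set.Ico_subset_Ico (by positivity)
    (by rwa [div_le_one hN]))
  have h1 : unif ((fun s => ((j : ℝ) + s) / 2 ^ n) ⁻¹' T) = unif S := by
    refine measure_congr ?_
    filter_upwards [ae_unif_mem] with s hs
    refine propext ?_
    change ((j : ℝ) + s) / 2 ^ n ∈ T ↔ s ∈ S
    have hfl : ⌊s⌋ = 0 := Int.floor_eq_zero_iff.2 hs
    rw [hT, Set.mem_ofPred_eq, mul_div_cancel₀ _ hN.ne', Int.floor_intCast_add,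
      Int.fract_intCast_add, hfl, Int.fract_eq_self.2 hs]
    simp
  rw [h1, Set.inter_eq_left.2 hsub] at key
  have h2 : unif T = volume T := by
    rw [unif, Measure.restrict_apply hTm, Set.inter_eq_left.2 hsub1]
  have h3 : ENNReal.ofReal (2 ^ n) = 2 ^ n := by
    rw [ENNReal.ofReal_pow (by norm_num)]
    simp
  rw [key, h2, h3, ← mul_assoc, ENNReal.inv_mul_cancel (by simp) (by simp), one_mul]

/-- The first `τ s` binary digits of `s`, as a key. -/
def digits (τ : ℝ → ℕ) (s : ℝ) : ℕ × ℤ := (τ s, ⌊(2 : ℝ) ^ τ s * s⌋)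

/-- The remaining binary digits of `s`. -/
def rest (τ : ℝ → ℕ) (s : ℝ) : ℝ := Int.fract ((2 : ℝ) ^ τ s * s)

lemma rest_mem (τ : ℝ → ℕ) (s : ℝ) : rest τ s ∈ Set.Ico (0 : ℝ) 1 :=
  ⟨Int.fract_nonneg _, Int.fract_lt_one _⟩

/-- `τ` is a stopping time for binary digits on the set `good`. -/
def IsStopping (τ : ℝ → ℕ) (good : ℝ → Prop) : Prop :=
  ∀ s s', s ∈ Set.Ico (0 : ℝ) 1 → s' ∈ Set.Ico (0 : ℝ) 1 → good s →
    ⌊(2 : ℝ) ^ τ s * s⌋ = ⌊(2 : ℝ) ^ τ s * s'⌋ → good s' ∧ τ s' = τ s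

lemma measurable_scale {τ : ℝ → ℕ} (hτ : Measurable τ) :
    Measurable fun s => (2 : ℝ) ^ τ s * s :=
  ((Measurable.of_discrete (f := fun n : ℕ => (2 : ℝ) ^ n)).comp hτ).mul measurable_id

lemma measurable_digits {τ : ℝ → ℕ} (hτ : Measurable τ) : Measurable (digits τ) :=
  hτ.prodMk (Int.measurable_floor.comp (measurable_scale hτ))

lemma measurable_rest {τ : ℝ → ℕ} (hτ : Measurable τ) : Measurable (rest τ) :=
  measurable_fract.comp (measurable_scale hτ)

lemma floor_scale_mem {n : ℕ} {s : ℝ} (hs : s ∈ Set.Ico (0 : ℝ) 1) :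
    0 ≤ ⌊(2 : ℝ) ^ n * s⌋ ∧ ⌊(2 : ℝ) ^ n * s⌋ < 2 ^ n := by
  have hN : (0 : ℝ) < 2 ^ n := by positivity
  refine ⟨Int.floor_nonneg.2 (mul_nonneg hN.le hs.1), ?_⟩
  rw [Int.floor_lt]
  push_cast
  nlinarith [hs.2]

lemma unif_digits_rest {τ : ℝ → ℕ} {good : ℝ → Prop} (h : IsStopping τ good)
    (hgood : ∀ᵐ s ∂unif, good s) (d : ℕ × ℤ) {S : Set ℝ} (hS : MeasurableSet S) :
    unif {s | digits τ s = d ∧ rest τ s ∈ S} = unif {s | digits τ s = d} * unif S := by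
  by_cases hex : ∃ s ∈ Set.Ico (0 : ℝ) 1, good s ∧ digits τ s = d
  · obtain ⟨s₀, hs₀, hg, rfl⟩ := hex
    set n := τ s₀ with hn
    set j := ⌊(2 : ℝ) ^ n * s₀⌋ with hj
    have hjm := floor_scale_mem (n := n) hs₀
    have key : ∀ s ∈ Set.Ico (0 : ℝ) 1, digits τ s = (n, j) ↔ ⌊(2 : ℝ) ^ n * s⌋ = j := by
      intro s hs
      constructor
      · intro he
        rw [digits, Prod.mk.injEq] at he
        rw [← he.1]
        exact he.2
      · intro he
        have := (h s₀ s hs₀ hs hg he.symm).2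
        rw [digits, this, ← he]
    have hτ : ∀ s, digits τ s = (n, j) → τ s = n := fun s hs => (Prod.mk.inj hs).1
    have e : ∀ S : Set ℝ, unif {s | digits τ s = (n, j) ∧ rest τ s ∈ S} =
        unif {s | ⌊(2 : ℝ) ^ n * s⌋ = j ∧ Int.fract ((2 : ℝ) ^ n * s) ∈ S} := by
      intro S
      refine measure_congr ?_
      filter_upwards [ae_unif_mem] with s hs
      refine propext ?_
      change (digits τ s = (n, j) ∧ rest τ s ∈ S) ↔ _ ∧ _
      rw [← key s hs]
      exact and_congr_right fun hd => by rw [rest, hτ s hd]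
    have e1 := e Set.univ
    rw [unif_digit hjm.1 hjm.2 MeasurableSet.univ] at e1
    simp only [Set.mem_univ, and_true, measure_univ, mul_one] at e1
    change unif {s | digits τ s = (n, j) ∧ rest τ s ∈ S} =
      unif {s | digits τ s = (n, j)} * unif S
    rw [e, e1, unif_digit hjm.1 hjm.2 hS]
  · have h0 : unif {s | digits τ s = d} = 0 := by
      rw [measure_eq_zero_iff_ae_notMem]
      filter_upwards [ae_unif_mem, hgood] with s hs hg hd
      exact hex ⟨s, hs, hg, hd⟩
    rw [h0, zero_mul]
    exact measure_mono_null (fun s hs => hs.1) h0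

/-- Fair labels turn into independent binary digits. -/
lemma measurePreserving_prependDigits {U C : Type*} [MeasurableSpace U] [Countable U]
    [DiscreteMeasurableSpace U] [MeasurableSpace C] [Countable C] [DiscreteMeasurableSpace C]
    (P : Measure U) [IsProbabilityMeasure P] (cl : U → C) (N : C → ℕ) (k : U → ℕ)
    (hk : ∀ u, k u < 2 ^ N (cl u))
    (hfair : ∀ c j j', j < 2 ^ N c → j' < 2 ^ N c →
      P {u | cl u = c ∧ k u = j} = P {u | cl u = c ∧ k u = j'}) :
    MeasurePreserving (fun z : U × ℝ => (cl z.1, ((k z.1 : ℝ) + z.2) / 2 ^ N (cl z.1)))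
      (P.prod unif) ((P.map cl).prod unif) := by
  have hcl : Measurable cl := Measurable.of_discrete
  have : IsProbabilityMeasure (P.map cl) := Measure.isProbabilityMeasure_map hcl.aemeasurable
  have hm : Measurable fun z : U × ℝ => (cl z.1, ((k z.1 : ℝ) + z.2) / 2 ^ N (cl z.1)) :=
    measurable_from_prod_countable_right fun u => by fun_prop
  refine ⟨hm, ext_prod_countable fun c S hS => ?_⟩
  rw [Measure.map_apply hm ((MeasurableSet.singleton c).prod hS), Measure.prod_prod,
    Measure.map_apply hcl (MeasurableSet.singleton c)]
  set n := N c with hn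
  have hN : (0 : ℝ) < 2 ^ n := by positivity
  have hpre : (fun z : U × ℝ => (cl z.1, ((k z.1 : ℝ) + z.2) / 2 ^ N (cl z.1))) ⁻¹' ({c} ×ˢ S) =
      ⋃ j ∈ Finset.range (2 ^ n), {u | cl u = c ∧ k u = j} ×ˢ
        ((fun s => ((j : ℝ) + s) / 2 ^ n) ⁻¹' S) := by
    ext ⟨u, s⟩
    simp only [Set.mem_preimage, Set.mem_prod, Set.mem_singleton_iff, Set.mem_iUnion,
      Finset.mem_range, Set.mem_ofPred_eq, exists_prop]
    constructor
    · rintro ⟨rfl, h⟩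
      exact ⟨k u, hk u, ⟨rfl, rfl⟩, h⟩
    · rintro ⟨j, hj, ⟨rfl, rfl⟩, h⟩
      exact ⟨rfl, h⟩
  have hset : cl ⁻¹' {c} = ⋃ j ∈ Finset.range (2 ^ n), {u | cl u = c ∧ k u = j} := by
    ext u
    simp only [Set.mem_preimage, Set.mem_singleton_iff, Set.mem_iUnion, Finset.mem_range,
      Set.mem_ofPred_eq, exists_prop]
    constructor
    · rintro rfl
      exact ⟨k u, hk u, rfl, rfl⟩
    · rintro ⟨j, hj, rfl, -⟩
      rfl
  have hd : ∀ i j, i ≠ j → Disjoint {u | cl u = c ∧ k u = i} {u | cl u = c ∧ k u = j} :=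
    fun i j hij => Set.disjoint_left.2 fun u h1 h2 => hij (h1.2.symm.trans h2.2)
  have h1 : unif S = ∑ j ∈ Finset.range (2 ^ n), volume (S ∩ Set.Ico ((j : ℝ) / 2 ^ n)
      (((j : ℝ) + 1) / 2 ^ n)) := by
    rw [← measure_biUnion_finset, ← Set.inter_iUnion₂, unif, Measure.restrict_apply hS]
    · congr 2
      ext s
      simp only [Set.mem_iUnion, Finset.mem_range, exists_prop, Set.mem_Ico, div_le_iff₀ hN,
        lt_div_iff₀ hN]
      constructor
      · intro hs
        have hs0 : 0 ≤ s * 2 ^ n := mul_nonneg hs.1 hN.le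
        refine ⟨⌊s * 2 ^ n⌋₊, ?_, Nat.floor_le hs0, Nat.lt_floor_add_one _⟩
        rw [Nat.floor_lt hs0]
        push_cast
        nlinarith [hs.2]
      · rintro ⟨j, hj, h1, h2⟩
        have hj' : (j : ℝ) + 1 ≤ 2 ^ n := by exact_mod_cast hj
        have hj0 : (0 : ℝ) ≤ j := Nat.cast_nonneg j
        constructor
        · by_contra hc
          nlinarith
        · by_contra hc
          nlinarith
    · intro i _ j _ hij
      refine Set.disjoint_left.2 fun s h1 h2 => hij ?_
      have a1 := h1.2
      have a2 := h2.2
      simp only [Set.mem_Ico, div_le_iff₀ hN, lt_div_iff₀ hN] at a1 a2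
      have b1 : (i : ℝ) < j + 1 := a1.1.trans_lt a2.2
      have b2 : (j : ℝ) < i + 1 := a2.1.trans_lt a1.2
      norm_cast at b1 b2
      omega
    · exact fun j _ => hS.inter measurableSet_Ico
  rw [hpre, hset, measure_biUnion_finset, measure_biUnion_finset]
  · have h0 : 0 < 2 ^ n := by positivity
    have hc : ∀ j ∈ Finset.range (2 ^ n), P {u | cl u = c ∧ k u = j} =
        P {u | cl u = c ∧ k u = 0} := fun j hj => hfair c j 0 (Finset.mem_range.1 hj) h0
    rw [Finset.sum_congr rfl hc, Finset.sum_const, h1, Finset.mul_sum]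
    refine Finset.sum_congr rfl fun j hj => ?_
    rw [Measure.prod_prod, hc j hj, unif_preimage_affine hN j hS, Finset.card_range,
      ENNReal.ofReal_pow (by norm_num), nsmul_eq_mul]
    push_cast
    rw [show ENNReal.ofReal 2 = 2 by simp]
    ring
  · exact fun i _ j _ hij => hd i j hij
  · exact fun j _ => MeasurableSet.of_discrete
  · exact fun i _ j _ hij => Set.Disjoint.set_prod_left (hd i j hij) _ _
  · exact fun j _ => MeasurableSet.of_discrete.prod (hS.preimage (by fun_prop))

lemma exists_cells {V : Type*} {Q : V → ℝ} (hQ : ∀ v, 0 < Q v) (s : Finset V) :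
    ∃ c : V → ℝ, (∀ v ∈ s, 0 ≤ c v ∧ c v + Q v ≤ ∑ w ∈ s, Q w) ∧
      ∀ v ∈ s, ∀ w ∈ s, v ≠ w → c v + Q v ≤ c w ∨ c w + Q w ≤ c v := by
  classical
  induction s using Finset.induction_on with
  | empty => exact ⟨fun _ => 0, by simp, by simp⟩
  | insert a s ha ih =>
    obtain ⟨c, h1, h2⟩ := ih
    have hne : ∀ v ∈ s, v ≠ a := fun v hv h => ha (h ▸ hv)
    have hs0 : 0 ≤ ∑ w ∈ s, Q w := Finset.sum_nonneg fun w _ => (hQ w).le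
    refine ⟨Function.update c a (∑ w ∈ s, Q w), ?_, ?_⟩
    · intro v hv
      rw [Finset.sum_insert ha]
      rcases Finset.mem_insert.1 hv with rfl | hv
      · rw [Function.update_self]
        exact ⟨hs0, (add_comm _ _).le⟩
      · rw [Function.update_of_ne (hne v hv)]
        exact ⟨(h1 v hv).1, (h1 v hv).2.trans (by linarith [hQ a])⟩
    · intro v hv w hw hvw
      rcases Finset.mem_insert.1 hv with hva | hvs <;>
        rcases Finset.mem_insert.1 hw with hwa | hws
      · exact absurd (hva.trans hwa.symm) hvw
      · rw [hva, Function.update_self, Function.update_of_ne (hne w hws)]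
        exact Or.inr (h1 w hws).2
      · rw [hwa, Function.update_self, Function.update_of_ne (hne v hvs)]
        exact Or.inl (h1 v hvs).2
      · rw [Function.update_of_ne (hne v hvs), Function.update_of_ne (hne w hws)]
        exact h2 v hvs w hws hvw

/-- The first `n` binary digits of `s` show that `s` lies in `[c, c + l)`. -/
def Decided (c l : ℝ) (n : ℕ) (s : ℝ) : Prop :=
  c ≤ ⌊(2 : ℝ) ^ n * s⌋ / 2 ^ n ∧ ((⌊(2 : ℝ) ^ n * s⌋ : ℝ) + 1) / 2 ^ n ≤ c + l

lemma Decided.mem {c l s : ℝ} {n : ℕ} (h : Decided c l n s) : s ∈ Set.Ico c (c + l) := by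
  have hN : (0 : ℝ) < 2 ^ n := by positivity
  constructor
  · refine h.1.trans ?_
    rw [div_le_iff₀ hN, mul_comm]
    exact Int.floor_le _
  · refine lt_of_lt_of_le ?_ h.2
    rw [lt_div_iff₀ hN, mul_comm]
    exact Int.lt_floor_add_one _

lemma measurableSet_decided (c l : ℝ) (n : ℕ) : MeasurableSet {s | Decided c l n s} := by
  have hm : Measurable fun s : ℝ => ⌊(2 : ℝ) ^ n * s⌋ := by fun_prop
  exact (MeasurableSet.of_discrete (s := {j : ℤ | c ≤ (j : ℝ) / 2 ^ n ∧
    ((j : ℝ) + 1) / 2 ^ n ≤ c + l})).preimage hm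

lemma volume_not_decided (c l : ℝ) (n : ℕ) :
    volume {s | s ∈ Set.Ico c (c + l) ∧ ¬ Decided c l n s} ≤
      min (ENNReal.ofReal l) (2 * (2⁻¹) ^ n) := by
  refine le_min ?_ ?_
  · refine (measure_mono (t := Set.Ico c (c + l)) fun s hs => hs.1).trans ?_
    rw [Real.volume_Ico, add_sub_cancel_left]
  · have hN : (0 : ℝ) < 2 ^ n := by positivity
    have hsub : {s | s ∈ Set.Ico c (c + l) ∧ ¬ Decided c l n s} ⊆
        Set.Ico c (c + (2⁻¹) ^ n) ∪ Set.Ico (c + l - (2⁻¹) ^ n) (c + l) := by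
      rintro s ⟨hs, hd⟩
      by_contra hc
      simp only [Set.mem_union, Set.mem_Ico, not_or, not_and, not_lt] at hc
      have h1 := hc.1 hs.1
      have h2 : s < c + l - (2⁻¹) ^ n := by
        by_contra h
        exact absurd hs.2 (not_lt.2 (hc.2 (not_lt.1 h)))
      have hfl := Int.floor_le ((2 : ℝ) ^ n * s)
      have hfl' := Int.lt_floor_add_one ((2 : ℝ) ^ n * s)
      have hinv : (2 : ℝ) ^ n * (2⁻¹) ^ n = 1 := by
        rw [← mul_pow]
        norm_num
      refine hd ⟨?_, ?_⟩
      · rw [le_div_iff₀ hN]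
        nlinarith
      · rw [div_le_iff₀ hN]
        nlinarith
    refine (measure_mono hsub).trans ((measure_union_le _ _).trans ?_)
    rw [Real.volume_Ico, Real.volume_Ico, add_sub_cancel_left, _root_.sub_sub_cancel, two_mul,
      ENNReal.ofReal_pow (by norm_num), ENNReal.ofReal_inv_of_pos (by norm_num)]
    simp

lemma tsum_min_pow_le {l : ℝ} (hl : 0 < l) (hl1 : l ≤ 1) :
    ∑' n : ℕ, min (ENNReal.ofReal l) (2 * (2⁻¹) ^ n) ≤
      ENNReal.ofReal (l * (-Real.log l / Real.log 2 + 4)) := by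
  have hlog : 0 < Real.log 2 := Real.log_pos (by norm_num)
  have hx : 0 ≤ -Real.log l / Real.log 2 :=
    div_nonneg (neg_nonneg.2 (Real.log_nonpos hl.le hl1)) hlog.le
  set N := ⌈-Real.log l / Real.log 2⌉₊ with hN
  have hN1 : -Real.log l / Real.log 2 ≤ N := Nat.le_ceil _
  have hN2 : (N : ℝ) < -Real.log l / Real.log 2 + 1 := Nat.ceil_lt_add_one hx
  have hpow : (2⁻¹ : ℝ) ^ N ≤ l := by
    rw [← Real.log_le_log_iff (by positivity) hl, Real.log_pow, Real.log_inv]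
    rw [div_le_iff₀ hlog] at hN1
    linarith
  rw [← Summable.sum_add_tsum_nat_add' (k := N + 1) ENNReal.summable]
  calc ∑ n ∈ Finset.range (N + 1), min (ENNReal.ofReal l) (2 * (2⁻¹) ^ n) +
        ∑' n : ℕ, min (ENNReal.ofReal l) (2 * (2⁻¹) ^ (n + (N + 1)))
      ≤ ∑ n ∈ Finset.range (N + 1), ENNReal.ofReal l +
        ∑' n : ℕ, (2 * (2⁻¹) ^ (N + 1)) * (2⁻¹ : ℝ≥0∞) ^ n := by
        refine add_le_add (Finset.sum_le_sum fun n _ => min_le_left _ _)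
          (ENNReal.tsum_le_tsum fun n => (min_le_right _ _).trans ?_)
        rw [pow_add]
        exact le_of_eq (by ring)
    _ = ENNReal.ofReal ((N + 1) * l + 2 * (2⁻¹) ^ N) := by
        rw [ENNReal.tsum_mul_left, ENNReal.tsum_geometric, ENNReal.one_sub_inv_two, inv_inv,
          Finset.sum_const, Finset.card_range, nsmul_eq_mul,
          ENNReal.ofReal_add (by positivity) (by positivity),
          ENNReal.ofReal_mul (by positivity), ENNReal.ofReal_mul (by positivity),
          ENNReal.ofReal_pow (by norm_num), ENNReal.ofReal_inv_of_pos (by norm_num),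
          ENNReal.ofReal_add (by positivity) (by positivity), pow_succ]
        congr 1
        · simp
        · have : (2 : ℝ≥0∞)⁻¹ * 2 = 1 := ENNReal.inv_mul_cancel (by simp) (by simp)
          simp only [ENNReal.ofReal_ofNat]
          rw [mul_assoc, mul_assoc, this, mul_one]
    _ ≤ ENNReal.ofReal (l * (-Real.log l / Real.log 2 + 4)) := by
        refine ENNReal.ofReal_le_ofReal ?_
        nlinarith

lemma floor_scale_congr {m n : ℕ} (hmn : m ≤ n) {s s' : ℝ}
    (h : ⌊(2 : ℝ) ^ n * s⌋ = ⌊(2 : ℝ) ^ n * s'⌋) : ⌊(2 : ℝ) ^ m * s⌋ = ⌊(2 : ℝ) ^ m * s'⌋ := by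
  have key : ∀ s : ℝ, ⌊(2 : ℝ) ^ m * s⌋ = ⌊(2 : ℝ) ^ n * s⌋ / ((2 ^ (n - m) : ℕ) : ℤ) := by
    intro s
    rw [← Int.floor_div_natCast]
    congr 1
    push_cast
    rw [_root_.eq_div_iff (by positivity), mul_right_comm, ← pow_add, Nat.add_sub_cancel' hmn]
  rw [key, key, h]

/-- A random variable with given finite law can be simulated from fair binary digits,
reading not many more digits than its entropy. -/
lemma exists_simulation {V : Type*} [Fintype V] [Nonempty V] {Q : V → ℝ} (hQ : ∀ v, 0 < Q v)
    (hQ1 : ∑ v, Q v = 1) :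
    ∃ (τ : ℝ → ℕ) (G : ℝ → V) (good : ℝ → Prop), Measurable τ ∧ IsStopping τ good ∧
      (∀ s s', good s → ⌊(2 : ℝ) ^ τ s * s⌋ = ⌊(2 : ℝ) ^ τ s * s'⌋ → G s' = G s) ∧
      (∀ᵐ s ∂unif, good s) ∧ (∀ v, unif {s | G s = v} = ENNReal.ofReal (Q v)) ∧
      ∫⁻ s, τ s ∂unif ≤ ENNReal.ofReal (∑ v, Q v * (-Real.log (Q v) / Real.log 2 + 4)) := by
  classical
  obtain ⟨c, hc1, hc2⟩ := exists_cells hQ Finset.univ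
  simp only [hQ1, Finset.mem_univ, true_implies] at hc1 hc2
  have huniq : ∀ {s v w}, s ∈ Set.Ico (c v) (c v + Q v) → s ∈ Set.Ico (c w) (c w + Q w) →
      v = w := by
    intro s v w hv hw
    by_contra hvw
    rcases hc2 v w hvw with h | h
    · exact absurd (hv.2.trans_le h) (not_lt.2 hw.1)
    · exact absurd (hw.2.trans_le h) (not_lt.2 hv.1)
  set dec : ℕ → ℝ → Prop := fun n s => ∃ v, Decided (c v) (Q v) n s with hdec
  set good : ℝ → Prop := fun s => ∃ n, dec n s with hgooddef
  set τ : ℝ → ℕ := fun s => sInf {n | dec n s} with hτ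
  set G : ℝ → V := fun s => if h : good s then h.choose_spec.choose else Classical.arbitrary V
    with hG
  have hdecm : ∀ n, MeasurableSet {s | dec n s} := by
    intro n
    simp only [hdec, Set.ofPred_exists]
    exact MeasurableSet.iUnion fun v => measurableSet_decided _ _ _
  have hGspec : ∀ {s v n}, Decided (c v) (Q v) n s → G s = v := by
    intro s v n h
    have hg : good s := ⟨n, v, h⟩
    simp only [hG, dif_pos hg]
    exact huniq hg.choose_spec.choose_spec.mem h.mem
  have hτspec : ∀ {s}, good s → dec (τ s) s := fun h => Nat.sInf_mem h
  have hcongr : ∀ {m n s s'}, m ≤ n → ⌊(2 : ℝ) ^ n * s⌋ = ⌊(2 : ℝ) ^ n * s'⌋ → ∀ v,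
      (Decided (c v) (Q v) m s ↔ Decided (c v) (Q v) m s') := by
    intro m n s s' hmn h v
    rw [Decided, Decided, floor_scale_congr hmn h]
  have hlt : ∀ n s, n < τ s → ¬ dec n s := fun n s h => Nat.notMem_of_lt_sInf h
  have hcellvol : ∀ v, unif (Set.Ico (c v) (c v + Q v)) = ENNReal.ofReal (Q v) := by
    intro v
    rw [unif, Measure.restrict_apply measurableSet_Ico, Set.inter_eq_left.2
      (Set.Ico_subset_Ico (hc1 v).1 (hc1 v).2), Real.volume_Ico, add_sub_cancel_left]
  have hcover : ∀ᵐ s ∂unif, ∃ v, s ∈ Set.Ico (c v) (c v + Q v) := by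
    have h1 : unif (⋃ v, Set.Ico (c v) (c v + Q v)) = 1 := by
      rw [measure_iUnion, tsum_fintype, Finset.sum_congr rfl fun v _ => hcellvol v,
        ← ENNReal.ofReal_sum_of_nonneg fun v _ => (hQ v).le, hQ1, ENNReal.ofReal_one]
      · exact fun v w hvw => Set.disjoint_left.2 fun s h1 h2 => hvw (huniq h1 h2)
      · exact fun v => measurableSet_Ico
    have h2 := (prob_compl_eq_zero_iff (MeasurableSet.iUnion fun v =>
      measurableSet_Ico (a := c v) (b := c v + Q v))).2 h1
    filter_upwards [measure_eq_zero_iff_ae_notMem.1 h2] with s hs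
    simpa using hs
  have hnd : ∀ n, unif {s | ¬ dec n s} ≤ ∑ v, min (ENNReal.ofReal (Q v)) (2 * (2⁻¹) ^ n) := by
    intro n
    calc unif {s | ¬ dec n s}
        ≤ unif (⋃ v, {s | s ∈ Set.Ico (c v) (c v + Q v) ∧ ¬ Decided (c v) (Q v) n s}) := by
          refine measure_mono_ae ?_
          filter_upwards [hcover] with s ⟨v, hv⟩ hs
          exact Set.mem_iUnion.2 ⟨v, hv, fun h => hs ⟨v, h⟩⟩
      _ ≤ ∑ v, unif {s | s ∈ Set.Ico (c v) (c v + Q v) ∧ ¬ Decided (c v) (Q v) n s} := by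
          refine (measure_iUnion_le _).trans ?_
          rw [tsum_fintype]
      _ ≤ _ := Finset.sum_le_sum fun v _ => (Measure.restrict_apply_le _ _).trans
          (volume_not_decided _ _ _)
  have hgood : ∀ᵐ s ∂unif, good s := by
    rw [ae_iff]
    have hle : ∀ n : ℕ, unif {s | ¬ good s} ≤ (Fintype.card V * 2) * (2⁻¹ : ℝ≥0∞) ^ n := by
      intro n
      refine (measure_mono (s := {s | ¬ good s}) (t := {s | ¬ dec n s})
        fun s hs hd => hs ⟨n, hd⟩).trans
        ((hnd n).trans ((Finset.sum_le_sum fun v _ => min_le_right _ _).trans ?_))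
      rw [Finset.sum_const, nsmul_eq_mul, mul_assoc]
      rfl
    have hlim : Tendsto (fun n : ℕ => (Fintype.card V * 2) * (2⁻¹ : ℝ≥0∞) ^ n) atTop
        (nhds ((Fintype.card V * 2) * 0)) :=
      ENNReal.Tendsto.const_mul (ENNReal.tendsto_pow_atTop_nhds_zero_of_lt_one
        (by simp)) (Or.inr (by finiteness))
    rw [mul_zero] at hlim
    exact le_antisymm (ge_of_tendsto' hlim hle) zero_le
  refine ⟨τ, G, good, ?_, ?_, ?_, hgood, ?_, ?_⟩
  · refine measurable_to_countable' fun n => ?_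
    have hset : τ ⁻¹' {n} = ({s | dec n s} ∩ ⋂ m ∈ Finset.range n, {s | dec m s}ᶜ) ∪
        (if n = 0 then ⋂ m, {s | dec m s}ᶜ else ∅) := by
      ext s
      simp only [Set.mem_preimage, Set.mem_singleton_iff, Set.mem_union, Set.mem_inter_iff,
        Set.mem_ofPred_eq, Set.mem_iInter, Finset.mem_range, Set.mem_compl_iff]
      constructor
      · rintro rfl
        by_cases hg : good s
        · exact Or.inl ⟨hτspec hg, fun m hm => hlt m s hm⟩
        · right
          have h0 : τ s = 0 := by
            have : {n | dec n s} = ∅ := Set.eq_empty_of_forall_notMem fun n h => hg ⟨n, h⟩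
            simp only [hτ, this, Nat.sInf_empty]
          rw [if_pos h0]
          simp only [Set.mem_iInter, Set.mem_compl_iff, Set.mem_ofPred_eq]
          exact fun m h => hg ⟨m, h⟩
      · rintro (⟨h1, h2⟩ | h)
        · refine le_antisymm (Nat.sInf_le h1) (not_lt.1 fun h => h2 _ h (hτspec ⟨n, h1⟩))
        · split_ifs at h with h0
          · simp only [Set.mem_iInter, Set.mem_compl_iff, Set.mem_ofPred_eq] at h
            have : {n | dec n s} = ∅ := Set.eq_empty_of_forall_notMem h
            simp only [hτ, this, Nat.sInf_empty, h0]
          · exact h.elim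
    rw [hset]
    refine ((hdecm n).inter (Finset.measurableSet_biInter _ fun m _ => (hdecm m).compl)).union ?_
    split_ifs
    · exact MeasurableSet.iInter fun m => (hdecm m).compl
    · exact MeasurableSet.empty
  · intro s s' _ _ hg h
    obtain ⟨v, hv⟩ := hτspec hg
    have hv' := (hcongr le_rfl h v).1 hv
    have hg' : good s' := ⟨_, v, hv'⟩
    refine ⟨hg', le_antisymm (Nat.sInf_le ⟨v, hv'⟩) (not_lt.1 fun hl => ?_)⟩
    obtain ⟨w, hw⟩ := hτspec hg'
    exact hlt _ s hl ⟨w, (hcongr hl.le h w).2 hw⟩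
  · intro s s' hg h
    obtain ⟨v, hv⟩ := hτspec hg
    rw [hGspec hv, hGspec ((hcongr le_rfl h v).1 hv)]
  · intro v
    rw [← hcellvol v]
    refine measure_congr ?_
    filter_upwards [hgood] with s hg
    refine propext ?_
    change G s = v ↔ s ∈ Set.Ico (c v) (c v + Q v)
    obtain ⟨n, w, hw⟩ := hg
    rw [hGspec hw]
    constructor
    · rintro rfl
      exact hw.mem
    · exact huniq hw.mem
  · have hsum : ∀ s, (τ s : ℝ≥0∞) ≤
        ∑' n : ℕ, {s | ¬ dec n s}.indicator (fun _ => (1 : ℝ≥0∞)) s := by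
      intro s
      refine le_trans ?_ (ENNReal.sum_le_tsum (Finset.range (τ s)))
      rw [Finset.sum_congr rfl fun n hn => Set.indicator_of_mem
        (show s ∈ {s | ¬ dec n s} from hlt n s (Finset.mem_range.1 hn)) _]
      simp
    calc ∫⁻ s, τ s ∂unif
        ≤ ∫⁻ s, ∑' n : ℕ, {s | ¬ dec n s}.indicator (fun _ => (1 : ℝ≥0∞)) s ∂unif :=
          lintegral_mono hsum
      _ = ∑' n : ℕ, unif {s | ¬ dec n s} := by
          have hm : ∀ n, AEMeasurable ({s | ¬ dec n s}.indicator fun _ => (1 : ℝ≥0∞)) unif :=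
            fun n => (measurable_const.indicator (hdecm n).compl).aemeasurable
          rw [lintegral_tsum hm]
          exact tsum_congr fun n => lintegral_indicator_one (hdecm n).compl
      _ ≤ ∑' n : ℕ, ∑ v, min (ENNReal.ofReal (Q v)) (2 * (2⁻¹) ^ n) :=
          ENNReal.tsum_le_tsum hnd
      _ = ∑ v, ∑' n : ℕ, min (ENNReal.ofReal (Q v)) (2 * (2⁻¹) ^ n) :=
          Summable.tsum_finsetSum fun v _ => ENNReal.summable
      _ ≤ ∑ v, ENNReal.ofReal (Q v * (-Real.log (Q v) / Real.log 2 + 4)) :=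
          Finset.sum_le_sum fun v _ => tsum_min_pow_le (hQ v)
            (by linarith [(hc1 v).1, (hc1 v).2])
      _ = _ := by
          refine (ENNReal.ofReal_sum_of_nonneg fun v _ => mul_nonneg (hQ v).le ?_).symm
          have hlog : 0 < Real.log 2 := Real.log_pos (by norm_num)
          have := div_nonneg (neg_nonneg.2 (Real.log_nonpos (hQ v).le
            (by linarith [(hc1 v).1, (hc1 v).2]))) hlog.le
          linarith

lemma sum_prod_mul_sum {B : Type*} [Fintype B] {q : B → ℝ} (hq : ∑ b, q b = 1) (g : B → ℝ)
    (n : ℕ) : ∑ v : Fin n → B, (∏ i, q (v i)) * ∑ i, g (v i) = n * ∑ b, q b * g b := by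
  have key : ∀ i : Fin n, ∑ v : Fin n → B, (∏ j, q (v j)) * g (v i) = ∑ b, q b * g b := by
    intro i
    have h := Fintype.prod_sum fun (j : Fin n) (b : B) => q b * if j = i then g b else 1
    have e1 : ∀ v : Fin n → B, ∏ j, (q (v j) * if j = i then g (v j) else 1) =
        (∏ j, q (v j)) * g (v i) := by
      intro v
      rw [Finset.prod_mul_distrib, Finset.prod_ite_eq' Finset.univ i fun j => g (v j)]
      simp
    have e2 : ∀ j : Fin n, (∑ b, q b * if j = i then g b else 1) =
        if j = i then ∑ b, q b * g b else 1 := by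
      intro j
      split_ifs
      · rfl
      · simpa using hq
    simp only [e1, e2] at h
    rw [← h]
    simp
  simp only [Finset.mul_sum]
  rw [Finset.sum_comm, Finset.sum_congr rfl fun i _ => key i]
  simp [Finset.mul_sum]

lemma exists_word_simulation {B : Type*} [Fintype B] [Nonempty B] [MeasurableSpace B]
    [DiscreteMeasurableSpace B] {q : B → ℝ} (hq : IsProbVector q) (π : Measure B)
    [IsProbabilityMeasure π] (hπ : ∀ b, π {b} = ENNReal.ofReal (q b)) (l : ℕ) :
    ∃ (τ : ℝ → ℕ) (w : ℝ → List B) (good : ℝ → Prop), Measurable τ ∧ IsStopping τ good ∧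
      (∀ s s', good s → ⌊(2 : ℝ) ^ τ s * s⌋ = ⌊(2 : ℝ) ^ τ s * s'⌋ → w s' = w s) ∧
      (∀ᵐ s ∂unif, good s) ∧ (∀ s, (w s).length = l) ∧
      (∀ u, unif {s | w s = u} = (Measure.infinitePi fun _ : ℕ => π).map (pfx l) {u}) ∧
      ∫⁻ s, τ s ∂unif ≤ ENNReal.ofReal (l * (vecEntropy q / Real.log 2) + 4) := by
  have hQ : ∀ v : Fin l → B, 0 < ∏ i, q (v i) := fun v => Finset.prod_pos fun i _ => hq.1 _
  have hQ1 : ∑ v : Fin l → B, ∏ i, q (v i) = 1 := by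
    rw [← Fintype.prod_sum fun (_ : Fin l) (b : B) => q b]
    simp [hq.2]
  obtain ⟨τ, G, good, h1, h2, h3, h4, h5, h6⟩ := exists_simulation hQ hQ1
  refine ⟨τ, fun s => List.ofFn (G s), good, h1, h2,
    fun s s' hg h => congrArg List.ofFn (h3 s s' hg h), h4,
    fun s => List.length_ofFn, fun u => ?_, h6.trans_eq ?_⟩
  · rw [Measure.map_apply (measurable_pfx l) (MeasurableSet.singleton u)]
    by_cases hu : u.length = l
    · subst hu
      have e : {s | List.ofFn (G s) = u} = {s | G s = fun i => u.get i} := by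
        ext s
        simp only [Set.mem_ofPred_eq]
        refine ⟨fun h => List.ofFn_injective (h.trans (List.ofFn_get u).symm), fun h => ?_⟩
        rw [h, List.ofFn_get]
      rw [e, h5]
      refine Eq.trans ?_ (infinitePi_pfx π u).symm
      rw [ENNReal.ofReal_prod_of_nonneg fun i _ => (hq.1 _).le]
      rw [← Fin.prod_univ_fun_getElem]
      exact Finset.prod_congr rfl fun i _ => (hπ _).symm
    · have e1 : {s | List.ofFn (G s) = u} = ∅ := by
        refine Set.eq_empty_of_forall_notMem fun s hs => hu ?_
        rw [← (show List.ofFn (G s) = u from hs), List.length_ofFn]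
      have e2 : pfx l ⁻¹' {u} = (∅ : Set (ℕ → B)) := by
        refine Set.eq_empty_of_forall_notMem fun x hx => hu ?_
        rw [← (show pfx l x = u from hx), length_pfx]
      rw [e1, e2, measure_empty, measure_empty]
  · congr 1
    have hlog : ∀ v : Fin l → B, -Real.log (∏ i, q (v i)) = ∑ i, -Real.log (q (v i)) := by
      intro v
      rw [Real.log_prod fun i _ => (hq.1 _).ne', Finset.sum_neg_distrib]
    have e : ∀ v : Fin l → B, (∏ i, q (v i)) * (-Real.log (∏ i, q (v i)) / Real.log 2 + 4) =
        ((∏ i, q (v i)) * ∑ i, -Real.log (q (v i))) / Real.log 2 + 4 * ∏ i, q (v i) := by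
      intro v
      rw [hlog]
      ring
    rw [Finset.sum_congr rfl fun v _ => e v, Finset.sum_add_distrib, ← Finset.mul_sum, hQ1,
      ← Finset.sum_div, sum_prod_mul_sum hq.2 fun b => -Real.log (q b), vecEntropy]
    simp only [mul_neg, Finset.sum_neg_distrib]
    ring

/-- Emitting a word with the right law in front of an i.i.d. sequence. -/
lemma lintegral_prepend_pfx {B : Type*} [Countable B] [MeasurableSpace B]
    [DiscreteMeasurableSpace B] (π : Measure B) [IsProbabilityMeasure π] (l : ℕ)
    {S : Set (ℕ → B)} (hS : MeasurableSet S) :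
    ∫⁻ v, (Measure.infinitePi fun _ : ℕ => π) (prepend v ⁻¹' S)
      ∂((Measure.infinitePi fun _ : ℕ => π).map (pfx l)) =
      (Measure.infinitePi fun _ : ℕ => π) S := by
  have hm : Measurable fun z : List B × (ℕ → B) => prepend z.1 z.2 :=
    measurable_from_prod_countable_right measurable_prepend
  have h := measurePreserving_pfx_dropS π l
  have h1 := h.measure_preimage (hS.preimage hm).nullMeasurableSet
  rw [Measure.prod_apply (hS.preimage hm)] at h1
  rw [show (fun x : ℕ → B => (pfx l x, dropS l x)) ⁻¹'
    ((fun z : List B × (ℕ → B) => prepend z.1 z.2) ⁻¹' S) = S by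
      ext x
      simp [prepend_pfx_dropS]] at h1
  exact h1.symm

lemma agree_of_toNat_eq_zero {c : ℤ} (hc : c.toNat = 0) {s s' : ℝ} (hs : s ∈ Set.Ico (0 : ℝ) 1)
    (hs' : s' ∈ Set.Ico (0 : ℝ) 1) : Agree c s s' := by
  refine ⟨hs, hs', ?_⟩
  rw [hc, pow_zero, one_mul, one_mul, Int.floor_eq_zero_iff.2 hs, Int.floor_eq_zero_iff.2 hs']

/-- A countable source of blocks carrying enough fair bits drives a stream of i.i.d. symbols. -/
theorem exists_stream_of_fair {X U C B : Type*} [MeasurableSpace X]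
    [MeasurableSpace U] [Countable U] [DiscreteMeasurableSpace U]
    [MeasurableSpace C] [Countable C] [DiscreteMeasurableSpace C]
    [Fintype B] [Nonempty B] [MeasurableSpace B] [DiscreteMeasurableSpace B]
    {μ : Measure X} [IsProbabilityMeasure μ] {P : Measure U} [IsProbabilityMeasure P]
    {bl : X → U} {nx : X → X}
    (hpar : MeasurePreserving (fun x => (bl x, nx x)) μ (P.prod μ))
    {q : B → ℝ} (hq : IsProbVector q) (π : Measure B) [IsProbabilityMeasure π]
    (hπ : ∀ b, π {b} = ENNReal.ofReal (q b))
    (cl : U → C) (N len : C → ℕ) (k : U → ℕ) (hk : ∀ u, k u < 2 ^ N (cl u))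
    (hfair : ∀ c j j', j < 2 ^ N c → j' < 2 ^ N c →
      P {u | cl u = c ∧ k u = j} = P {u | cl u = c ∧ k u = j'})
    (hlen0 : ∀ u, 0 < len (cl u))
    (hlen : Integrable (fun u => (len (cl u) : ℝ)) P)
    (hN : Integrable (fun u => (N (cl u) : ℝ)) P)
    (hmean : (∫ u, (len (cl u) : ℝ) ∂P) * (vecEntropy q / Real.log 2) + 4 <
      ∫ u, (N (cl u) : ℝ) ∂P) :
    ∃ Y : X → ℕ → B, Measurable Y ∧ μ.map Y = Measure.infinitePi (fun _ : ℕ => π) ∧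
      ∀ x i, len (cl (bl x)) ≤ i → Y x i = Y (nx x) (i - len (cl (bl x))) := by
  choose τ w good hτ hstopping hw hgood hwlen hlaw hτint using fun c : C =>
    exists_word_simulation hq π hπ (len c)
  set α : U → ℝ → ℝ := fun u s => ((k u : ℝ) + s) / 2 ^ N (cl u) with hα
  set F : C × ℝ → C × ℕ × ℤ := fun z => (z.1, digits (τ z.1) z.2) with hF
  have hcl : Measurable cl := Measurable.of_discrete
  set Pc := P.map cl with hPc
  have : IsProbabilityMeasure Pc := Measure.isProbabilityMeasure_map hcl.aemeasurable
  have hFm : Measurable F := measurable_from_prod_countable_right fun c =>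
    measurable_const.prodMk (measurable_digits (hτ c))
  have hrm : Measurable fun z : C × ℝ => rest (τ z.1) z.2 :=
    measurable_from_prod_countable_right fun c => measurable_rest (hτ c)
  set ρ : Measure (C × ℕ × ℤ) := (Pc.prod unif).map F with hρ
  have : IsProbabilityMeasure ρ := Measure.isProbabilityMeasure_map hFm.aemeasurable
  set word : C × ℕ × ℤ → List B := fun z => w z.1 ((z.2.2 : ℝ) / 2 ^ z.2.1) with hword
  set e : C × ℕ × ℤ → ℤ := fun z => (N z.1 : ℤ) - z.2.1 with he
  set goodK : C × ℕ × ℤ → Prop := fun z => (z.2.2 : ℝ) / 2 ^ z.2.1 ∈ Set.Ico (0 : ℝ) 1 ∧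
    good z.1 ((z.2.2 : ℝ) / 2 ^ z.2.1) ∧ τ z.1 ((z.2.2 : ℝ) / 2 ^ z.2.1) = z.2.1 with hgoodK
  have hp : ∀ n : ℕ, (0 : ℝ) < 2 ^ n := fun n => by positivity
  have hpt : ∀ (n : ℕ) (j : ℤ), ⌊(2 : ℝ) ^ n * ((j : ℝ) / 2 ^ n)⌋ = j := by
    intro n j
    rw [mul_div_cancel₀ _ (hp n).ne', Int.floor_intCast]
  have hptmem : ∀ {n : ℕ} {s : ℝ}, s ∈ Set.Ico (0 : ℝ) 1 →
      (⌊(2 : ℝ) ^ n * s⌋ : ℝ) / 2 ^ n ∈ Set.Ico (0 : ℝ) 1 := by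
    intro n s hs
    have h := floor_scale_mem (n := n) hs
    refine ⟨div_nonneg (by exact_mod_cast h.1) (hp n).le, ?_⟩
    rw [div_lt_one (hp n)]
    exact_mod_cast h.2
  have hdig : ∀ (c : C) (s : ℝ), s ∈ Set.Ico (0 : ℝ) 1 → good c s →
      goodK (c, digits (τ c) s) ∧ word (c, digits (τ c) s) = w c s := by
    intro c s hs hg
    have h1 := hstopping c s _ hs (hptmem hs) hg (hpt (τ c s) _).symm
    exact ⟨⟨hptmem hs, h1.1, h1.2⟩, hw c s _ hg (hpt (τ c s) _).symm⟩
  have hαmem : ∀ u s, s ∈ Set.Ico (0 : ℝ) 1 → α u s ∈ Set.Ico (0 : ℝ) 1 := by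
    intro u s hs
    have h1 : (k u : ℝ) + 1 ≤ 2 ^ N (cl u) := by exact_mod_cast hk u
    refine ⟨div_nonneg (add_nonneg (Nat.cast_nonneg _) hs.1) (hp _).le, ?_⟩
    rw [div_lt_one (hp _)]
    linarith [hs.2]
  have hsplit : MeasurePreserving (fun z : C × ℝ => (F z, rest (τ z.1) z.2)) (Pc.prod unif)
      (ρ.prod unif) := by
    refine ⟨hFm.prodMk hrm, ext_prod_countable fun d S hS => ?_⟩
    obtain ⟨c, d⟩ := d
    rw [Measure.map_apply (hFm.prodMk hrm) ((MeasurableSet.singleton _).prod hS),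
      Measure.prod_prod, hρ, Measure.map_apply hFm (MeasurableSet.singleton _)]
    have e1 : (fun z : C × ℝ => (F z, rest (τ z.1) z.2)) ⁻¹' ({(c, d)} ×ˢ S) =
        {c} ×ˢ {s | digits (τ c) s = d ∧ rest (τ c) s ∈ S} := by
      ext ⟨c', s⟩
      simp only [hF, Set.mem_preimage, Set.mem_prod, Set.mem_singleton_iff, Set.mem_ofPred_eq,
        Prod.mk.injEq]
      constructor
      · rintro ⟨⟨rfl, h1⟩, h2⟩
        exact ⟨rfl, h1, h2⟩
      · rintro ⟨rfl, h1, h2⟩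
        exact ⟨⟨rfl, h1⟩, h2⟩
    have e2 : F ⁻¹' {(c, d)} = {c} ×ˢ {s | digits (τ c) s = d} := by
      ext ⟨c', s⟩
      simp only [hF, Set.mem_preimage, Set.mem_prod, Set.mem_singleton_iff, Set.mem_ofPred_eq,
        Prod.mk.injEq]
      constructor
      · rintro ⟨rfl, h1⟩
        exact ⟨rfl, h1⟩
      · rintro ⟨rfl, h1⟩
        exact ⟨rfl, h1⟩
    rw [e1, e2, Measure.prod_prod, Measure.prod_prod,
      unif_digits_rest (hstopping c) (hgood c) d hS, mul_assoc]
  have hlintF : ∀ g : C × ℕ × ℤ → ℝ≥0∞,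
      ∫⁻ d, g d ∂ρ = ∫⁻ c, ∫⁻ s, g (F (c, s)) ∂unif ∂Pc := by
    intro g
    have hg : Measurable g := Measurable.of_discrete
    rw [hρ, lintegral_map hg hFm]
    exact lintegral_prod (fun z => g (F z)) (hg.comp hFm).aemeasurable
  have hstep := hsplit.comp (measurePreserving_prependDigits P cl N k hk hfair)
  have hlawmap : ∀ c, unif.map (fun s => word (c, digits (τ c) s)) =
      (Measure.infinitePi fun _ : ℕ => π).map (pfx (len c)) := by
    intro c
    have hm : Measurable fun s => word (c, digits (τ c) s) :=
      (Measurable.of_discrete (f := word)).comp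
        (measurable_const.prodMk (measurable_digits (hτ c)))
    refine Measure.ext_of_singleton fun u => ?_
    rw [← hlaw c u, Measure.map_apply hm (MeasurableSet.singleton u)]
    refine measure_congr ?_
    filter_upwards [ae_unif_mem, hgood c] with s hs hg
    refine propext ?_
    change word (c, digits (τ c) s) = u ↔ w c s = u
    rw [(hdig c s hs hg).2]
  have hact : MeasurePreserving (fun z : (C × ℕ × ℤ) × (ℕ → B) => prepend (word z.1) z.2)
      (ρ.prod (Measure.infinitePi fun _ : ℕ => π)) (Measure.infinitePi fun _ : ℕ => π) := by
    have hm : Measurable fun z : (C × ℕ × ℤ) × (ℕ → B) => prepend (word z.1) z.2 :=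
      measurable_from_prod_countable_right fun d => measurable_prepend (word d)
    refine ⟨hm, Measure.ext fun S hS => ?_⟩
    rw [Measure.map_apply hm hS, Measure.prod_apply (hm hS), hlintF]
    have e1 : ∀ c, ∫⁻ s, (Measure.infinitePi fun _ : ℕ => π) (Prod.mk (F (c, s)) ⁻¹'
        ((fun z : (C × ℕ × ℤ) × (ℕ → B) => prepend (word z.1) z.2) ⁻¹' S)) ∂unif =
        (Measure.infinitePi fun _ : ℕ => π) S := by
      intro c
      have hm' : Measurable fun s => word (c, digits (τ c) s) :=
        (Measurable.of_discrete (f := word)).comp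
          (measurable_const.prodMk (measurable_digits (hτ c)))
      rw [← lintegral_prepend_pfx π (len c) hS, ← hlawmap c,
        lintegral_map Measurable.of_discrete hm']
      rfl
    rw [lintegral_congr e1, lintegral_const, measure_univ, mul_one]
  have hgoodae : ∀ᵐ d ∂ρ, goodK d := by
    rw [hρ, ae_map_iff hFm.aemeasurable MeasurableSet.of_discrete]
    refine (Measure.ae_prod_iff_ae_ae (p := fun z => goodK (F z))
      (hFm (MeasurableSet.of_discrete (s := {d | goodK d})))).2 (ae_of_all _ fun c => ?_)
    filter_upwards [ae_unif_mem, hgood c] with s hs hg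
    exact (hdig c s hs hg).1
  have hH0 : 0 ≤ vecEntropy q / Real.log 2 := by
    refine div_nonneg ?_ (Real.log_nonneg (by norm_num))
    rw [vecEntropy, ← Finset.sum_neg_distrib]
    refine Finset.sum_nonneg fun b _ => ?_
    have hb : q b ≤ 1 := by
      rw [← hq.2]
      exact Finset.single_le_sum (fun b _ => (hq.1 b).le) (Finset.mem_univ b)
    nlinarith [hq.1 b, Real.log_nonpos (hq.1 b).le hb]
  have hlenC : Integrable (fun c => (len c : ℝ)) Pc :=
    (integrable_map_measure Measurable.of_discrete.aestronglyMeasurable hcl.aemeasurable).2 hlen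
  have hNC : Integrable (fun c => (N c : ℝ)) Pc :=
    (integrable_map_measure Measurable.of_discrete.aestronglyMeasurable hcl.aemeasurable).2 hN
  have hbdi : Integrable (fun c => (len c : ℝ) * (vecEntropy q / Real.log 2) + 4) Pc :=
    (hlenC.mul_const _).add (integrable_const _)
  have hbd0 : ∀ c, 0 ≤ (len c : ℝ) * (vecEntropy q / Real.log 2) + 4 := fun c => by positivity
  have hτle : ∫⁻ d, (d.2.1 : ℝ≥0∞) ∂ρ ≤
      ENNReal.ofReal (∫ c, ((len c : ℝ) * (vecEntropy q / Real.log 2) + 4) ∂Pc) := by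
    rw [hlintF, ofReal_integral_eq_lintegral_ofReal hbdi (ae_of_all _ hbd0)]
    exact lintegral_mono hτint
  have hτi : Integrable (fun d : C × ℕ × ℤ => (d.2.1 : ℝ)) ρ := by
    refine ⟨Measurable.of_discrete.aestronglyMeasurable, ?_⟩
    rw [hasFiniteIntegral_iff_ofReal (ae_of_all _ fun d => Nat.cast_nonneg _)]
    simp only [ENNReal.ofReal_natCast]
    exact hτle.trans_lt ENNReal.ofReal_lt_top
  have hτreal : ∫ d, (d.2.1 : ℝ) ∂ρ ≤
      ∫ c, ((len c : ℝ) * (vecEntropy q / Real.log 2) + 4) ∂Pc := by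
    rw [integral_eq_lintegral_of_nonneg_ae (ae_of_all _ fun d => Nat.cast_nonneg _) hτi.1]
    simp only [ENNReal.ofReal_natCast]
    exact ENNReal.toReal_le_of_le_ofReal (integral_nonneg hbd0) hτle
  have hfst : MeasurePreserving (fun d : C × ℕ × ℤ => d.1) ρ Pc := by
    refine ⟨Measurable.of_discrete, ?_⟩
    rw [hρ, Measure.map_map Measurable.of_discrete hFm]
    exact measurePreserving_fst.map_eq
  have hNρ : Integrable (fun d : C × ℕ × ℤ => (N d.1 : ℝ)) ρ :=
    hfst.integrable_comp_of_integrable hNC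
  have hNint : ∫ d, (N d.1 : ℝ) ∂ρ = ∫ u, (N (cl u) : ℝ) ∂P := by
    have hNm : ∀ m : Measure C, AEStronglyMeasurable (fun c => (N c : ℝ)) m := fun m =>
      Measurable.of_discrete.aestronglyMeasurable
    have e1 := integral_map (μ := P) hcl.aemeasurable (hNm _)
    have e2 := integral_map (μ := ρ) hfst.measurable.aemeasurable (hNm _)
    rw [hfst.map_eq] at e2
    exact e2.symm.trans e1
  have hbdint : ∫ c, ((len c : ℝ) * (vecEntropy q / Real.log 2) + 4) ∂Pc =
      (∫ u, (len (cl u) : ℝ) ∂P) * (vecEntropy q / Real.log 2) + 4 := by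
    rw [integral_add (hlenC.mul_const _) (integrable_const _), integral_mul_const,
      integral_map hcl.aemeasurable Measurable.of_discrete.aestronglyMeasurable]
    simp
  refine exists_stream_code (ρ := ρ) (em := fun u s => F (cl u, α u s))
    (st := fun u s => rest (τ (cl u)) (α u s)) (word := word) (e := e) (good := goodK)
    (len := fun u => len (cl u)) hpar hstep (fun u s _ => rest_mem _ _) (fun u s => hwlen _ _)
    hlen0 hact ?_ ?_ hgoodae ?_
  · simp only [he, Int.cast_sub, Int.cast_natCast]
    exact hNρ.sub hτi
  · simp only [he, Int.cast_sub, Int.cast_natCast]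
    rw [integral_sub hNρ hτi, hNint]
    linarith
  · intro u s s' c₀ hag hgd
    obtain ⟨hs, hs', hfl⟩ := hag
    set c := cl u with hc
    set a := α u s with ha
    set a' := α u s' with ha'
    have ham : a ∈ Set.Ico (0 : ℝ) 1 := hαmem u s hs
    have ham' : a' ∈ Set.Ico (0 : ℝ) 1 := hαmem u s' hs'
    set n := τ c a with hn
    have hga : good c a := (hstopping c _ a hgd.1 ham hgd.2.1 (by
      rw [hgd.2.2]
      exact hpt _ _)).1
    change Agree (c₀ + ((N c : ℤ) - n)) (rest (τ c) a) (rest (τ c) a') ∧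
      (0 ≤ c₀ + ((N c : ℤ) - n) → word (F (c, a)) = word (F (c, a')))
    rcases lt_or_ge (c₀ + ((N c : ℤ) - n)) 0 with hneg | hnn
    · exact ⟨agree_of_toNat_eq_zero (Int.toNat_of_nonpos hneg.le) (rest_mem _ _) (rest_mem _ _),
        fun h => absurd h (not_le.2 hneg)⟩
    have hfull : ⌊(2 : ℝ) ^ (N c + c₀.toNat) * a⌋ = ⌊(2 : ℝ) ^ (N c + c₀.toNat) * a'⌋ := by
      have h1 : ∀ r : ℝ, (2 : ℝ) ^ (N c + c₀.toNat) * α u r =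
          ((2 ^ c₀.toNat * k u : ℕ) : ℝ) + 2 ^ c₀.toNat * r := by
        intro r
        rw [hα, pow_add]
        push_cast
        have := (hp (N c)).ne'
        field_simp
        rw [hc, mul_comm]
      rw [ha, ha', h1, h1, Int.floor_natCast_add, Int.floor_natCast_add, hfl]
    set M := (c₀ + ((N c : ℤ) - n)).toNat with hM
    have hle : n + M ≤ N c + c₀.toNat := by omega
    have hnM := floor_scale_congr hle hfull
    have hnfl : ⌊(2 : ℝ) ^ n * a⌋ = ⌊(2 : ℝ) ^ n * a'⌋ :=
      floor_scale_congr (Nat.le_add_right n M) hnM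
    have hτ' : τ c a' = n := (hstopping c a a' ham ham' hga hnfl).2
    refine ⟨⟨rest_mem _ _, rest_mem _ _, ?_⟩, fun _ => ?_⟩
    · have h2 : ∀ r : ℝ, (2 : ℝ) ^ M * Int.fract ((2 : ℝ) ^ n * r) =
          (2 : ℝ) ^ (n + M) * r - ((2 ^ M * ⌊(2 : ℝ) ^ n * r⌋ : ℤ) : ℝ) := by
        intro r
        rw [Int.fract, pow_add]
        push_cast
        ring
      rw [rest, rest, hτ', ← hn, ← hM, h2, h2, Int.floor_sub_intCast, Int.floor_sub_intCast, hnM,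
        hnfl]
    · have : F (c, a) = F (c, a') := by
        simp only [hF, digits, hτ', ← hn, hnfl]
      rw [this]

lemma size_mul_log_two_le {c : ℕ} (hc : 0 < c) :
    (Nat.size c : ℝ) * Real.log 2 ≤ Real.log c + Real.log 2 := by
  have h1 : 0 < Nat.size c := Nat.size_pos.2 hc
  have h2 : 2 ^ (Nat.size c - 1) ≤ c := Nat.lt_size.1 (by lia)
  have h3 : (2 : ℝ) ^ (Nat.size c - 1) ≤ c := by exact_mod_cast h2
  have h4 := Real.log_le_log (by positivity) h3
  rw [Real.log_pow, Nat.cast_sub h1, Nat.cast_one] at h4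
  linarith

lemma ofReal_prod_map {A : Type*} (u : List A) {g : A → ℝ} (hg : ∀ s, 0 ≤ g s) :
    ENNReal.ofReal (u.map g).prod = (u.map fun s => ENNReal.ofReal (g s)).prod := by
  induction u with
  | nil => simp
  | cons s u ih => simp [ENNReal.ofReal_mul (hg s), ih]

lemma Classes.mul_log_two_le {U T : Type*} [MeasurableSpace U] [Countable U]
    [DiscreteMeasurableSpace U] {P : Measure U} [IsProbabilityMeasure P] {κ : U → T} {w : T → ℝ}
    {D : T → Finset U} (h : Classes P κ w D) {n : U → ℕ}
    (hn : ∀ u, n u ≤ Nat.size (D (κ u)).card) {u : U} (hu : u ∈ D (κ u)) :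
    (n u : ℝ) * Real.log 2 ≤ -Real.log (w (κ u)) + Real.log 2 := by
  have hc : 0 < (D (κ u)).card := Finset.card_pos.2 ⟨u, hu⟩
  have hw := h.pos (κ u)
  have h1 := h.measure_eq (κ u) (fun _ => True)
  have h2 : ((D (κ u)).card : ℝ≥0∞) * ENNReal.ofReal (w (κ u)) ≤ 1 := by
    rw [Finset.filter_true] at h1
    exact h1 ▸ prob_le_one
  rw [← ENNReal.ofReal_natCast, ← ENNReal.ofReal_mul (by positivity), ENNReal.ofReal_le_one] at h2
  have h3 := Real.log_nonpos (by positivity) h2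
  rw [Real.log_mul (by positivity) hw.ne'] at h3
  have h4 := size_mul_log_two_le hc
  have h5 : (n u : ℝ) ≤ Nat.size (D (κ u)).card := by exact_mod_cast hn u
  have h6 := mul_le_mul_of_nonneg_right h5 (Real.log_nonneg one_le_two)
  linarith

section Blocks

variable {A : Type*}

/-- The number of occurrences of each letter in a word. -/
def wordType (u : List A) : A → ℕ := by
  classical exact fun a => u.count a

/-- The expected length of the first block. -/
def meanLen [MeasurableSpace A] (a b : A) (k : ℕ) (π : Measure A) : ℝ :=
  (∑' m, (Measure.infinitePi fun _ : ℕ => π) (noMk a b k m)).toReal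

lemma meanLen_nonneg [MeasurableSpace A] (a b : A) (k : ℕ) (π : Measure A) : 0 ≤ meanLen a b k π :=
  ENNReal.toReal_nonneg

variable [Fintype A]

lemma sum_map_eq_sum_wordType (u : List A) (g : A → ℝ) :
    (u.map g).sum = ∑ a, wordType u a * g a := by
  classical
  rw [Finset.sum_list_map_count]
  simp only [nsmul_eq_mul]
  refine (Finset.sum_subset (Finset.subset_univ _) fun a _ ha => ?_).trans ?_
  · rw [List.count_eq_zero_of_not_mem (by simpa using ha)]
    simp
  · refine Finset.sum_congr rfl fun a _ => ?_
    simp only [wordType]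

lemma prod_map_eq_prod_wordType (u : List A) (g : A → ℝ) :
    (u.map g).prod = ∏ a, g a ^ wordType u a := by
  classical
  rw [Finset.prod_list_map_count]
  refine (Finset.prod_subset (Finset.subset_univ _) fun a _ ha => ?_).trans ?_
  · rw [List.count_eq_zero_of_not_mem (by simpa using ha)]
    simp
  · refine Finset.prod_congr rfl fun a _ => ?_
    simp only [wordType]

lemma sum_wordType (u : List A) : ∑ a, wordType u a = u.length := by
  have h := sum_map_eq_sum_wordType u fun _ => 1
  simp only [List.map_const', List.sum_replicate, nsmul_eq_mul, mul_one] at h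
  exact_mod_cast h.symm

variable (a b : A) (k : ℕ)

lemma finite_properBlocks_wordType (t : A → ℕ) :
    {u | u ∈ properBlocks a b k ∧ wordType u = t}.Finite :=
  (List.finite_length_eq A (∑ a, t a)).subset fun u hu => by
    change u.length = _
    rw [← sum_wordType u, hu.2]

lemma log_prod_pow_wordType {p : A → ℝ} (hp : IsProbVector p) (u : List A) :
    Real.log (∏ s, p s ^ wordType u s) = -(u.map fun s => -Real.log (p s)).sum := by
  rw [Real.log_prod fun s _ => (pow_pos (hp.1 s) _).ne', sum_map_eq_sum_wordType]
  simp [Real.log_pow]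

lemma exists_geometric_reference (A : Type*) [Fintype A] {ε : ℝ} (hε : 0 < ε) :
    ∃ (K : ℝ) (R : Measure (A → ℕ)), IsProbabilityMeasure R ∧ (∀ t, 0 < R.real {t}) ∧
      ∀ t, Real.log (R.real {t}) = -K - ε * ∑ s, (t s : ℝ) := by
  have he : Real.exp (-ε) < 1 := by simpa using hε
  have he0 := Real.exp_pos (-ε)
  set r : unitInterval := ⟨1 - Real.exp (-ε), by linarith, by linarith⟩ with hr
  have hr0 : r ≠ 0 := fun h => by
    have := congrArg Subtype.val h
    simp only [hr, Set.Icc.coe_zero] at this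
    linarith
  have hr1 : r ≠ 1 := fun h => by
    have := congrArg Subtype.val h
    simp only [hr, Set.Icc.coe_one] at this
    linarith
  have hpos := ProbabilityTheory.geometricMeasure_real_singleton_pos hr0 hr1
  have hR : ∀ t : A → ℕ,
      (Measure.pi fun _ : A => ProbabilityTheory.geometricMeasure r).real {t} =
        ∏ s, (ProbabilityTheory.geometricMeasure r).real {t s} := by
    intro t
    rw [measureReal_def, Measure.pi_singleton, ENNReal.toReal_prod]
    rfl
  refine ⟨-(Fintype.card A * Real.log (1 - Real.exp (-ε))),
    Measure.pi fun _ => ProbabilityTheory.geometricMeasure r, inferInstance, fun t => ?_,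
    fun t => ?_⟩
  · rw [hR]
    exact Finset.prod_pos fun s _ => hpos _
  · rw [hR, Real.log_prod fun s _ => (hpos _).ne']
    have e : ∀ n, Real.log ((ProbabilityTheory.geometricMeasure r).real {n}) =
        Real.log (1 - Real.exp (-ε)) - ε * n := by
      intro n
      rw [ProbabilityTheory.geometricMeasure_real_singleton hr0]
      simp only [hr, _root_.sub_sub_cancel]
      rw [Real.log_mul (by positivity) (by linarith), Real.log_pow, Real.log_exp]
      ring
    simp only [e, Finset.sum_sub_distrib, Finset.mul_sum]
    simp

lemma vecEntropy_nonneg {B : Type*} [Fintype B] {q : B → ℝ} (hq : IsProbVector q) :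
    0 ≤ vecEntropy q := by
  refine neg_nonneg.2 (Finset.sum_nonpos fun s _ => mul_nonpos_of_nonneg_of_nonpos (hq.1 s).le
    (Real.log_nonpos (hq.1 s).le ?_))
  rw [← hq.2]
  exact Finset.single_le_sum (fun i _ => (hq.1 i).le) (Finset.mem_univ s)

lemma exists_ne_of_vecEntropy_pos {p : A → ℝ} (hp : IsProbVector p) (h : 0 < vecEntropy p) :
    ∃ a b : A, b ≠ a := by
  by_contra! hc
  have h1 : ∀ s, p s = 1 := fun s => by
    rw [← hp.2, Fintype.sum_eq_single s fun t ht => absurd (hc s t) ht]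
  simp [vecEntropy, h1] at h

variable [MeasurableSpace A] [DiscreteMeasurableSpace A]

/-- The distribution of the first block. -/
def blkLaw (π : Measure A) : Measure (List A) :=
  (Measure.infinitePi fun _ : ℕ => π).map (blk a b k)

variable {a b} {p : A → ℝ} (π : Measure A) [IsProbabilityMeasure π]

lemma classes_blkLaw (hab : b ≠ a) (hp : IsProbVector p) (hπ : ∀ s, π {s} = ENNReal.ofReal (p s)) :
    Classes (blkLaw a b k π) wordType (fun t => ∏ s, p s ^ t s)
      fun t => (finite_properBlocks_wordType a b k t).toFinset := by
  have h0 : ∀ s, π {s} ≠ 0 := fun s => by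
    rw [hπ]
    exact (ENNReal.ofReal_pos.2 (hp.1 s)).ne'
  refine ⟨fun t => Finset.prod_pos fun s _ => pow_pos (hp.1 s) _, fun t u hu => ?_, fun u hu => ?_⟩
  · rw [Set.Finite.mem_toFinset] at hu
    refine ⟨hu.2, ?_⟩
    rw [blkLaw, map_blk_singleton a b k π hab (h0 a) (h0 b), Set.indicator_of_mem hu.1, ← hu.2,
      ← prod_map_eq_prod_wordType]
    simp only [hπ]
    exact (ofReal_prod_map u fun s => (hp.1 s).le).symm
  · rw [blkLaw, map_blk_singleton a b k π hab (h0 a) (h0 b), Set.indicator_of_notMem]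
    intro h
    exact hu (by simpa using h)

lemma blkLaw_wald (hab : b ≠ a) (hp : IsProbVector p) (hπ : ∀ s, π {s} = ENNReal.ofReal (p s))
    {g : A → ℝ} (hg : ∀ s, 0 ≤ g s) :
    Integrable (fun u => (u.map g).sum) (blkLaw a b k π) ∧
      ∫ u, (u.map g).sum ∂blkLaw a b k π = meanLen a b k π * ∑ s, p s * g s := by
  have h0 : ∀ s, π {s} ≠ 0 := fun s => by
    rw [hπ]
    exact (ENNReal.ofReal_pos.2 (hp.1 s)).ne'
  have hnn : ∀ u : List A, 0 ≤ (u.map g).sum := fun u => List.sum_nonneg fun y hy => by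
    obtain ⟨s, -, rfl⟩ := List.mem_map.1 hy
    exact hg s
  have hsum : 0 ≤ ∑ s, p s * g s := Finset.sum_nonneg fun s _ => mul_nonneg (hp.1 s).le (hg s)
  have key : ∫⁻ u, ENNReal.ofReal (u.map g).sum ∂blkLaw a b k π =
      ENNReal.ofReal (meanLen a b k π * ∑ s, p s * g s) := by
    rw [blkLaw, lintegral_map Measurable.of_discrete (measurable_blk)]
    simp only [sum_map_blk]
    simp_rw [ENNReal.ofReal_sum_of_nonneg fun i _ => hg _]
    rw [lintegral_sum_bLen a b k π hab (h0 a) (h0 b) fun s => ENNReal.ofReal (g s),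
      ENNReal.ofReal_mul (meanLen_nonneg a b k π), meanLen,
      ENNReal.ofReal_toReal (tsum_noMk_lt_top a b k π hab (h0 a) (h0 b)).ne, lintegral_fintype,
      ENNReal.ofReal_sum_of_nonneg fun s _ => mul_nonneg (hp.1 s).le (hg s)]
    congr 1
    refine Finset.sum_congr rfl fun s _ => ?_
    rw [hπ, ENNReal.ofReal_mul (hp.1 s).le, mul_comm]
  have hm : AEStronglyMeasurable (fun u : List A => (u.map g).sum) (blkLaw a b k π) :=
    (Measurable.of_discrete).aestronglyMeasurable
  refine ⟨⟨hm, ?_⟩, ?_⟩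
  · rw [hasFiniteIntegral_iff_ofReal (Eventually.of_forall hnn), key]
    exact ENNReal.ofReal_lt_top
  · rw [integral_eq_lintegral_of_nonneg_ae (Eventually.of_forall hnn) hm, key,
      ENNReal.toReal_ofReal (mul_nonneg (meanLen_nonneg a b k π) hsum)]

lemma le_meanLen (hab : b ≠ a) (hp : IsProbVector p) (hπ : ∀ s, π {s} = ENNReal.ofReal (p s)) :
    (k + 1 : ℝ) ≤ meanLen a b k π := by
  have h0 : ∀ s, π {s} ≠ 0 := fun s => by
    rw [hπ]
    exact (ENNReal.ofReal_pos.2 (hp.1 s)).ne'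
  have h := blkLaw_wald k π hab hp hπ (g := fun _ => 1) fun _ => zero_le_one
  simp only [List.map_const', List.sum_replicate, nsmul_eq_mul, mul_one, hp.2] at h
  have : IsProbabilityMeasure (blkLaw a b k π) :=
    Measure.isProbabilityMeasure_map (measurable_blk).aemeasurable
  rw [← h.2]
  have h1 : ∀ᵐ u ∂blkLaw a b k π, (k + 1 : ℝ) ≤ (u.length : ℝ) := by
    rw [blkLaw, ae_map_iff (measurable_blk).aemeasurable (MeasurableSet.of_discrete)]
    filter_upwards [ae_found a b k π hab (h0 a) (h0 b)] with x hx
    rw [blk, length_pfx]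
    exact_mod_cast (bLen_spec hx).lt
  calc (k + 1 : ℝ) = ∫ _, (k + 1 : ℝ) ∂blkLaw a b k π := by simp
    _ ≤ _ := integral_mono_ae (integrable_const _) h.1 h1

/-- Marker blocks of a source of larger entropy drive a stream of i.i.d. symbols. -/
theorem exists_marker_code {B : Type*} [Fintype B] [Nonempty B] [MeasurableSpace B]
    [DiscreteMeasurableSpace B] (hp : IsProbVector p) (hπ : ∀ s, π {s} = ENNReal.ofReal (p s))
    {q : B → ℝ} (hq : IsProbVector q) (ρ : Measure B) [IsProbabilityMeasure ρ]
    (hρ : ∀ s, ρ {s} = ENNReal.ofReal (q s)) (hH : vecEntropy q < vecEntropy p) :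
    ∃ (a b : A) (k : ℕ) (Y : (ℕ → A) → ℕ → B), b ≠ a ∧ Measurable Y ∧
      (Measure.infinitePi fun _ : ℕ => π).map Y = Measure.infinitePi (fun _ : ℕ => ρ) ∧
      ∀ x i, bLen a b k x ≤ i → Y x i = Y (nxt a b k x) (i - bLen a b k x) := by
  have h0 : ∀ s, π {s} ≠ 0 := fun s => by
    rw [hπ]
    exact (ENNReal.ofReal_pos.2 (hp.1 s)).ne'
  obtain ⟨a, b, hab⟩ := exists_ne_of_vecEntropy_pos hp ((vecEntropy_nonneg hq).trans_lt hH)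
  have hδ : 0 < (vecEntropy p - vecEntropy q) / 2 := by linarith
  obtain ⟨K, R, hRp, hR0, hRl⟩ := exists_geometric_reference A hδ
  obtain ⟨k, hk⟩ := exists_nat_gt ((K + 8 * Real.log 2) / ((vecEntropy p - vecEntropy q) / 2))
  have : IsProbabilityMeasure (blkLaw a b k π) :=
    Measure.isProbabilityMeasure_map measurable_blk.aemeasurable
  have hcls := classes_blkLaw k π hab hp hπ
  obtain ⟨n, j, hj, hn, hfair, hcard⟩ := exists_extraction _ _ _ _ hcls
  have hl1 : ∀ s, 0 ≤ -Real.log (p s) := fun s => by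
    rw [neg_nonneg]
    refine Real.log_nonpos (hp.1 s).le ?_
    rw [← hp.2]
    exact Finset.single_le_sum (fun i _ => (hp.1 i).le) (Finset.mem_univ s)
  obtain ⟨hwi, hwE⟩ := blkLaw_wald k π hab hp hπ hl1
  obtain ⟨hli, hlE⟩ := blkLaw_wald k π hab hp hπ (g := fun _ => 1) fun _ => zero_le_one
  simp only [List.map_const', List.sum_replicate, nsmul_eq_mul, mul_one, hp.2] at hli hlE
  have hL := le_meanLen k π hab hp hπ
  set L := meanLen a b k π
  have hwE' : ∫ u, (u.map fun s => -Real.log (p s)).sum ∂blkLaw a b k π = L * vecEntropy p := by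
    rw [hwE, vecEntropy]
    simp
  have hlog2 : 0 < Real.log 2 := Real.log_pos one_lt_two
  have hni : Integrable (fun u => (n u : ℝ)) (blkLaw a b k π) := by
    refine ((hwi.add (integrable_const (Real.log 2))).div_const (Real.log 2)).mono'
      (Measurable.of_discrete).aestronglyMeasurable ?_
    filter_upwards [hcls.ae_mem] with u hu
    have h := hcls.mul_log_two_le hn hu
    rw [log_prod_pow_wordType hp, neg_neg] at h
    rw [Real.norm_of_nonneg (Nat.cast_nonneg _), le_div_iff₀ hlog2]
    exact h
  have hRe : ∀ u : List A, Real.log (R.real {wordType u}) =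
      -K - (vecEntropy p - vecEntropy q) / 2 * (u.length : ℝ) := by
    intro u
    rw [hRl, ← sum_wordType u, Nat.cast_sum]
  have hex := hcls.integral_extraction hcard R hR0 hni
    (by
      simp only [log_prod_pow_wordType hp]
      exact hwi.neg)
    (by
      simp only [hRe]
      exact (integrable_const (-K)).sub (hli.const_mul _))
  simp only [log_prod_pow_wordType hp, hRe] at hex
  rw [integral_neg, neg_neg, hwE', integral_sub (integrable_const _) (hli.const_mul _),
    integral_const_mul, hlE] at hex
  simp only [integral_const, probReal_univ, one_smul] at hex
  rw [div_lt_iff₀ hδ] at hk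
  have hlen : ∀ᵐ u ∂blkLaw a b k π, ((max 1 (∑ s, wordType u s) : ℕ) : ℝ) = u.length := by
    rw [blkLaw, ae_map_iff measurable_blk.aemeasurable MeasurableSet.of_discrete]
    refine Eventually.of_forall fun x => ?_
    rw [sum_wordType, blk, length_pfx, max_eq_right (bLen_pos x)]
  have hfair' : ∀ (c : (A → ℕ) × ℕ) i i', i < 2 ^ c.2 → i' < 2 ^ c.2 →
      blkLaw a b k π {u | (wordType u, n u) = c ∧ j u = i} =
        blkLaw a b k π {u | (wordType u, n u) = c ∧ j u = i'} := by
    rintro ⟨t, N⟩ i i' hi hi'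
    simpa only [Prod.mk.injEq, and_assoc] using hfair t N i i' hi hi'
  have hmean : (∫ u, ((max 1 (∑ s, wordType u s) : ℕ) : ℝ) ∂blkLaw a b k π) *
      (vecEntropy q / Real.log 2) + 4 < ∫ u, (n u : ℝ) ∂blkLaw a b k π := by
    have e : L * (vecEntropy q / Real.log 2) + 4 =
        (L * vecEntropy q + 4 * Real.log 2) / Real.log 2 := by
      field_simp
    rw [integral_congr_ae hlen, hlE, e, div_lt_iff₀ hlog2]
    have := mul_le_mul_of_nonneg_right hL hδ.le
    nlinarith
  obtain ⟨Y, hY, hYm, hYc⟩ := exists_stream_of_fair (P := blkLaw a b k π)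
    (measurePreserving_blk_nxt a b k π hab (h0 a) (h0 b)) hq ρ hρ
    (C := (A → ℕ) × ℕ) (fun u => (wordType u, n u)) (fun c => c.2)
    (fun c => max 1 (∑ s, c.1 s)) j hj hfair' (fun u => lt_max_of_lt_left one_pos)
    (hli.congr (hlen.mono fun u hu => hu.symm)) hni hmean
  refine ⟨a, b, k, Y, hab, hY, hYm, fun x i hi => ?_⟩
  have e : max 1 (∑ s, wordType (blk a b k x) s) = bLen a b k x := by
    rw [sum_wordType, blk, length_pfx, max_eq_right (bLen_pos x)]
  have h := hYc x i
  simp only [e] at h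
  exact h hi

end Blocks

lemma measurable_sInf_nat {X : Type*} [MeasurableSpace X] {P : ℕ → X → Prop}
    (hP : ∀ d, MeasurableSet {x | P d x}) : Measurable fun x => sInf {d | P d x} := by
  refine measurable_to_countable' fun n => ?_
  have : (fun x => sInf {d | P d x}) ⁻¹' {n} =
      ({x | P n x} ∩ ⋂ m, ⋂ (_ : m < n), {x | P m x}ᶜ) ∪
        ((⋂ m, {x | P m x}ᶜ) ∩ {_x | n = 0}) := by
    ext x
    simp only [Set.mem_preimage, Set.mem_singleton_iff, Set.mem_union, Set.mem_inter_iff,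
      Set.mem_ofPred_eq, Set.mem_iInter, Set.mem_compl_iff]
    constructor
    · rintro rfl
      by_cases hx : {d | P d x}.Nonempty
      · exact Or.inl ⟨Nat.sInf_mem hx, fun m hm => Nat.notMem_of_lt_sInf hm⟩
      · rw [Set.not_nonempty_iff_eq_empty] at hx
        refine Or.inr ⟨fun m hm => ?_, by simp [hx]⟩
        have : m ∈ {d | P d x} := hm
        simp [hx] at this
    · rintro (⟨h1, h2⟩ | ⟨h1, rfl⟩)
      · refine le_antisymm (Nat.sInf_le h1) (not_lt.1 fun h => h2 _ h ?_)
        exact Nat.sInf_mem (s := {d | P d x}) ⟨n, h1⟩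
      · rw [Set.eq_empty_of_forall_notMem (s := {d | P d x}) h1, Nat.sInf_empty]
  rw [this]
  exact ((hP n).inter (MeasurableSet.iInter fun m => MeasurableSet.iInter fun _ =>
    (hP m).compl)).union ((MeasurableSet.iInter fun m => (hP m).compl).inter
      (MeasurableSet.const _))

section TwoSided

variable {A B : Type*}

/-- The one-sided sequence read from position `t` on. -/
def future (t : ℤ) (x : ℤ → A) : ℕ → A := fun n => x (t + n)

lemma dropS_future (t : ℤ) (n : ℕ) (x : ℤ → A) : dropS n (future t x) = future (t + n) x := by
  funext i
  simp [dropS, future, add_assoc]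

lemma future_shift (t : ℤ) (x : ℤ → A) : future t (shift x) = future (t + 1) x := by
  funext i
  simp only [future, shift]
  congr 1
  ring

variable (a b : A) (k : ℕ)

/-- The marker word ends right before position `n` of the two-sided sequence `x`. -/
def EndsAt (n : ℤ) (x : ℤ → A) : Prop := Mk a b k (k + 1) (future (n - (k + 1)) x)

/-- The distance from `n` back to the nearest position at which a marker ends. -/
def lag (n : ℤ) (x : ℤ → A) : ℕ := sInf {d : ℕ | EndsAt a b k (n - d) x}

/-- The stationary code that restarts the stream code `Y` after each marker. -/
def markerCode (Y : (ℕ → A) → ℕ → B) (x : ℤ → A) (n : ℤ) : B :=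
  Y (future (n - lag a b k n x) x) (lag a b k n x)

variable {a b k}

lemma endsAt_shift (n : ℤ) (x : ℤ → A) : EndsAt a b k n (shift x) ↔ EndsAt a b k (n + 1) x := by
  rw [EndsAt, EndsAt, future_shift]
  ring_nf

lemma lag_shift (n : ℤ) (x : ℤ → A) : lag a b k n (shift x) = lag a b k (n + 1) x := by
  simp only [lag, endsAt_shift]
  congr! 3
  ring_nf

lemma markerCode_shift (Y : (ℕ → A) → ℕ → B) (x : ℤ → A) :
    markerCode a b k Y (shift x) = shift (markerCode a b k Y x) := by
  funext n
  simp only [markerCode, shift, lag_shift, future_shift]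
  congr 2
  ring

lemma mk_dropS_iff {x : ℕ → A} (s m : ℕ) (hm : k < m) :
    Mk a b k m (dropS s x) ↔ Mk a b k (s + m) x := by
  constructor
  · rintro ⟨l, rfl, h1, h2⟩
    exact ⟨s + l, by ring, fun j hj => by rw [← h1 j hj, dropS, add_assoc],
      by rw [← h2, dropS, add_assoc]⟩
  · rintro ⟨l, hl, h1, h2⟩
    obtain ⟨l', rfl⟩ : ∃ l', l = s + l' := ⟨l - s, by lia⟩
    exact ⟨l', by lia, fun j hj => by rw [← h1 j hj, dropS, add_assoc],
      by rw [← h2, dropS, add_assoc]⟩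

lemma mk_future_iff {x : ℤ → A} (t : ℤ) {m : ℕ} (hm : k < m) :
    Mk a b k m (future t x) ↔ EndsAt a b k (t + m) x := by
  obtain ⟨l, rfl⟩ : ∃ l, m = l + (k + 1) := ⟨m - (k + 1), by lia⟩
  rw [← mk_dropS_iff l (k + 1) (by lia), dropS_future, EndsAt]
  push_cast
  congr! 2
  ring

/-- Distinct markers do not overlap. -/
lemma Mk.add_lt_of_lt (hab : b ≠ a) {x : ℕ → A} {s m : ℕ} (hs : Mk a b k s x) (hm : Mk a b k m x)
    (h : s < m) : s + k < m := by
  obtain ⟨l, rfl, -, h2⟩ := hs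
  obtain ⟨l', rfl, h1, -⟩ := hm
  by_contra hc
  refine hab ?_
  rw [← h2, ← h1 (l + k - l') (by lia)]
  congr 1
  lia

lemma stream_restart (hab : b ≠ a) {Y : (ℕ → A) → ℕ → B}
    (hY : ∀ x i, bLen a b k x ≤ i → Y x i = Y (nxt a b k x) (i - bLen a b k x))
    {m i : ℕ} (hi : m ≤ i) {x : ℕ → A} (hx : Mk a b k m x) :
    Y x i = Y (dropS m x) (i - m) := by
  induction m using Nat.strong_induction_on generalizing x i with
  | _ m ih =>
    have hex : ∃ n, Mk a b k n x := ⟨m, hx⟩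
    have hs := bLen_spec hex
    have hle : bLen a b k x ≤ m := not_lt.1 fun h => ((bLen_eq_iff hex _).1 rfl).2 m h hx
    rw [hY x i (hle.trans hi)]
    rcases hle.eq_or_lt with h | h
    · rw [nxt, h]
    · have h1 := hs.add_lt_of_lt hab hx h
      have h2 : Mk a b k (m - bLen a b k x) (nxt a b k x) := by
        rw [nxt, mk_dropS_iff _ _ (by lia), Nat.add_sub_cancel' hle]
        exact hx
      rw [ih (m - bLen a b k x) (by have := bLen_pos (a := a) (b := b) (k := k) x; lia)
        (Nat.sub_le_sub_right hi _) h2, nxt, dropS_dropS, Nat.sub_sub, Nat.add_sub_cancel' hle]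

lemma markerCode_eq (hab : b ≠ a) {Y : (ℕ → A) → ℕ → B}
    (hY : ∀ x i, bLen a b k x ≤ i → Y x i = Y (nxt a b k x) (i - bLen a b k x))
    {x : ℤ → A} {t : ℤ} {m i : ℕ} (hi : m ≤ i) (hx : Mk a b k m (future t x)) :
    markerCode a b k Y x (t + i) = Y (future t x) i := by
  have h1 : EndsAt a b k (t + i - (i - m : ℕ)) x := by
    rw [mk_future_iff t hx.lt] at hx
    convert! hx using 1
    push_cast [hi]
    ring
  have hle : lag a b k (t + i) x ≤ i - m := Nat.sInf_le h1
  have h2 : EndsAt a b k (t + i - lag a b k (t + i) x) x :=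
    Nat.sInf_mem (s := {d : ℕ | EndsAt a b k (t + i - d) x}) ⟨_, h1⟩
  rw [markerCode]
  generalize lag a b k (t + i) x = d at *
  have e : t + (i : ℤ) - d = t + (i - d : ℕ) := by
    push_cast [show d ≤ i by lia]
    ring
  have hk := hx.lt
  rw [e, ← mk_future_iff t (by lia)] at h2
  rw [stream_restart hab hY (i := i) (by lia) h2, dropS_future, e]
  congr 1
  lia

variable [MeasurableSpace A] [MeasurableSpace B]

lemma measurable_future (t : ℤ) : Measurable (future t : (ℤ → A) → ℕ → A) :=
  measurable_pi_lambda _ fun _ => measurable_pi_apply _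

variable [Finite A] [DiscreteMeasurableSpace A]

lemma measurable_lag (n : ℤ) : Measurable (lag a b k n) := by
  have hE : ∀ d : ℕ, MeasurableSet {x | EndsAt a b k (n - d) x} := fun d =>
    measurable_future _ (measurableSet_Mk (k + 1))
  exact measurable_sInf_nat hE

lemma measurable_markerCode {Y : (ℕ → A) → ℕ → B} (hY : Measurable Y) :
    Measurable (markerCode a b k Y) := by
  refine measurable_pi_lambda _ fun n => ?_
  have h : Measurable fun z : ℕ × (ℤ → A) => Y (future (n - z.1) z.2) z.1 :=
    measurable_from_prod_countable_right fun d =>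
      (measurable_pi_apply d).comp (hY.comp (measurable_future (n - d)))
  exact h.comp ((measurable_lag n).prodMk measurable_id)

end TwoSided

section Bernoulli

variable {A : Type*} [Fintype A] [MeasurableSpace A]

lemma isProbabilityMeasure_of_isBernoulliMeasure {μ : Measure (ℤ → A)} {p : A → ℝ}
    (h : IsBernoulliMeasure μ p) (hp : IsProbVector p) : IsProbabilityMeasure μ := by
  obtain ⟨s⟩ : Nonempty A := by
    by_contra hc
    rw [not_nonempty_iff] at hc
    simpa using hp.2
  exact ⟨by simpa using h ∅ fun _ => s⟩

variable [DiscreteMeasurableSpace A]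

lemma exists_letter_measure {p : A → ℝ} (hp : IsProbVector p) :
    ∃ π : Measure A, IsProbabilityMeasure π ∧ ∀ s, π {s} = ENNReal.ofReal (p s) := by
  classical
  have h : ∀ s, (∑ i, ENNReal.ofReal (p i) • Measure.dirac i : Measure A) {s} =
      ENNReal.ofReal (p s) := by
    intro s
    simp [Measure.finsetSum_apply, Set.indicator_apply]
  refine ⟨∑ i, ENNReal.ofReal (p i) • Measure.dirac i, ⟨?_⟩, h⟩
  simp [Measure.finsetSum_apply, ← ENNReal.ofReal_sum_of_nonneg fun i _ => (hp.1 i).le, hp.2]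

lemma infinitePi_cylinder {ι : Type*} {p : A → ℝ} (hp : IsProbVector p) (π : Measure A)
    [IsProbabilityMeasure π] (hπ : ∀ s, π {s} = ENNReal.ofReal (p s)) (F : Finset ι) (t : ι → A) :
    (Measure.infinitePi fun _ : ι => π) {x | ∀ i ∈ F, x i = t i} =
      ENNReal.ofReal (∏ i ∈ F, p (t i)) := by
  have e : {x : ι → A | ∀ i ∈ F, x i = t i} = Set.pi (F : Set ι) fun i => {t i} := by
    ext x
    simp [Set.mem_pi]
  rw [e, Measure.infinitePi_pi _ fun i _ => MeasurableSet.singleton _,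
    ENNReal.ofReal_prod_of_nonneg fun i _ => (hp.1 _).le]
  simp only [hπ]

lemma map_future_of_isBernoulliMeasure {μ : Measure (ℤ → A)} {p : A → ℝ}
    (h : IsBernoulliMeasure μ p) (hp : IsProbVector p) (π : Measure A)
    [IsProbabilityMeasure π] (hπ : ∀ s, π {s} = ENNReal.ofReal (p s)) (t : ℤ) :
    μ.map (future t) = Measure.infinitePi fun _ : ℕ => π := by
  have := isProbabilityMeasure_of_isBernoulliMeasure h hp
  have := Measure.isProbabilityMeasure_map (μ := μ) (measurable_future (A := A) t).aemeasurable
  refine ext_of_cylinder_le fun F s => ?_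
  rw [Measure.map_apply (measurable_future t) (measurableSet_cylinder_eq F s),
    infinitePi_cylinder hp π hπ]
  have hinj : Function.Injective fun n : ℕ => t + (n : ℤ) := fun m n hmn => by simpa using hmn
  have e : (future t ⁻¹' {x | ∀ i ∈ F, x i = s i} : Set (ℤ → A)) =
      {x | ∀ i ∈ F.map ⟨_, hinj⟩, x i = s (i - t).toNat} := by
    ext x
    simp [future]
  rw [e, h, Finset.prod_map]
  simp

/-- Restarting a stream code at each marker turns an i.i.d. stream law into a two-sided one. -/
theorem map_markerCode {B : Type*} [Fintype B] [MeasurableSpace B] [DiscreteMeasurableSpace B]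
    {μ : Measure (ℤ → A)} {ν : Measure (ℤ → B)} {p : A → ℝ} {q : B → ℝ}
    (hμ : IsBernoulliMeasure μ p) (hν : IsBernoulliMeasure ν q) (hp : IsProbVector p)
    (hq : IsProbVector q) (π : Measure A) [IsProbabilityMeasure π]
    (hπ : ∀ s, π {s} = ENNReal.ofReal (p s)) (ρ : Measure B) [IsProbabilityMeasure ρ]
    (hρ : ∀ s, ρ {s} = ENNReal.ofReal (q s)) {a b : A} (hab : b ≠ a) {k : ℕ}
    {Y : (ℕ → A) → ℕ → B} (hYm : Measurable Y)
    (hYlaw : (Measure.infinitePi fun _ : ℕ => π).map Y = Measure.infinitePi fun _ : ℕ => ρ)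
    (hY : ∀ x i, bLen a b k x ≤ i → Y x i = Y (nxt a b k x) (i - bLen a b k x)) :
    ν = μ.map (markerCode a b k Y) := by
  have h0 : ∀ s, π {s} ≠ 0 := fun s => by
    rw [hπ]
    exact (ENNReal.ofReal_pos.2 (hp.1 s)).ne'
  have := isProbabilityMeasure_of_isBernoulliMeasure hμ hp
  have := isProbabilityMeasure_of_isBernoulliMeasure hν hq
  have hφ : Measurable (markerCode a b k Y) := measurable_markerCode hYm
  have := Measure.isProbabilityMeasure_map (μ := μ) hφ.aemeasurable
  refine ext_of_cylinder_le fun F t => ?_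
  rw [Measure.map_apply hφ (measurableSet_cylinder_eq F t)]
  obtain ⟨M, hM⟩ : ∃ M : ℕ, ∀ i ∈ F, -(M : ℤ) ≤ i :=
    ⟨∑ i ∈ F, i.natAbs, fun i hi => by
      have := Finset.single_le_sum (f := fun i : ℤ => i.natAbs) (fun i _ => Nat.zero_le _) hi
      lia⟩
  have key : ∀ n : ℕ, ν {x | ∀ i ∈ F, x i = t i} ≤
      μ (markerCode a b k Y ⁻¹' {x | ∀ i ∈ F, x i = t i}) +
        (Measure.infinitePi fun _ : ℕ => π) (noMk a b k n) := by
    intro n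
    have hf := map_future_of_isBernoulliMeasure hμ hp π hπ (-((M + n : ℕ) : ℤ))
    have hν' := map_future_of_isBernoulliMeasure hν hq ρ hρ (-((M + n : ℕ) : ℤ))
    set T : ℤ := -((M + n : ℕ) : ℤ) with hT
    set C : Set (ℕ → B) := {y | ∀ i ∈ F, y (i - T).toNat = t i} with hC
    have hCm : MeasurableSet C := by
      have e : C = ⋂ i ∈ (F : Set ℤ), {y | y (i - T).toNat = t i} := by
        ext y
        simp [hC]
      rw [e]
      exact MeasurableSet.biInter F.countable_toSet fun i _ =>
        measurableSet_eq_fun (measurable_pi_apply (i - T).toNat) measurable_const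
    have hFT : ∀ i ∈ F, T + ((i - T).toNat : ℤ) = i := fun i hi => by
      have := hM i hi
      lia
    have e1 : {x : ℤ → B | ∀ i ∈ F, x i = t i} = future T ⁻¹' C := by
      ext x
      refine forall₂_congr fun i hi => ?_
      rw [future, hFT i hi]
    have hNm : MeasurableSet (noMk a b k n) := (dependsOnPfx_noMk n).measurableSet
    rw [e1, ← Measure.map_apply (measurable_future T) hCm, hν', ← hYlaw,
      Measure.map_apply hYm hCm, ← hf, Measure.map_apply (measurable_future T) (hYm hCm),
      Measure.map_apply (measurable_future T) hNm, ← e1]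
    refine (measure_mono fun x hx => ?_).trans (measure_union_le _ _)
    by_cases hx' : future T x ∈ noMk a b k n
    · exact Or.inr hx'
    · obtain ⟨m, hm, hmk⟩ : ∃ m ≤ n, Mk a b k m (future T x) := by
        simpa [noMk] using hx'
      refine Or.inl fun i hi => ?_
      have h1 : m ≤ (i - T).toNat := by
        have := hM i hi
        lia
      have h2 := markerCode_eq hab hY h1 hmk
      rw [hFT i hi] at h2
      exact h2.trans (hx i hi)
  have hlim := ENNReal.tendsto_atTop_zero_of_tsum_ne_top
    (tsum_noMk_lt_top a b k π hab (h0 a) (h0 b)).ne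
  have hlim' := (tendsto_const_nhds (x := μ (markerCode a b k Y ⁻¹'
    {x | ∀ i ∈ F, x i = t i}))).add hlim
  rw [add_zero] at hlim'
  exact ge_of_tendsto' hlim' key

end Bernoulli

end BernoulliFactor

/-- **Ornstein (unequal entropies).** If `p` and `q` are strictly positive probability
vectors on finite alphabets with `H(p) > H(q)`, then the Bernoulli scheme `BS(q)` is a
homomorphic image (factor) of `BS(p)`. -/
theorem bernoulli_factor_of_entropy_gt
    {A B : Type*} [Fintype A] [Fintype B]
    [MeasurableSpace A] [DiscreteMeasurableSpace A]
    [MeasurableSpace B] [DiscreteMeasurableSpace B]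
    (p : A → ℝ) (q : B → ℝ) (hp : IsProbVector p) (hq : IsProbVector q)
    (μ : Measure (ℤ → A)) (ν : Measure (ℤ → B))
    (hμ : IsBernoulliMeasure μ p) (hν : IsBernoulliMeasure ν q)
    (hH : vecEntropy q < vecEntropy p) :
    ∃ (D : Set (ℤ → A)) (φ : (ℤ → A) → (ℤ → B)), IsFactorMap μ ν D φ := by
  have := BernoulliFactor.isProbabilityMeasure_of_isBernoulliMeasure hμ hp
  obtain ⟨π, _, hπ⟩ := BernoulliFactor.exists_letter_measure hp
  obtain ⟨ρ, _, hρ⟩ := BernoulliFactor.exists_letter_measure hq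
  have : Nonempty B := nonempty_of_isProbabilityMeasure ρ
  obtain ⟨a, b, k, Y, hab, hYm, hYlaw, hY⟩ :=
    BernoulliFactor.exists_marker_code π hp hπ hq ρ hρ hH
  exact ⟨Set.univ, BernoulliFactor.markerCode a b k Y,
    { measurable_map := BernoulliFactor.measurable_markerCode hYm
      dom_measurable := MeasurableSet.univ
      dom_shift_invariant := Set.preimage_univ
      dom_full := measure_univ
      pushforward := BernoulliFactor.map_markerCode hμ hν hp hq π hπ ρ hρ hab hYm hYlaw hY
      equivariant := fun x _ => BernoulliFactor.markerCode_shift Y x }⟩
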